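/- Let Q(x₁,…,x₅) = a₁x₁² + ⋯ + a₅x₅² where each aᵢ ∈ 𝔽[t] is a squarefree nonzero polynomial, the determinant D = a₁a₂a₃a₄a₅ is cubefree, and aᵢx² + aⱼy² + a_k z² is anisotropic over 𝔽_q(t) for all 1 ≤ i < j < k ≤ 5. Then there exist a permutation σ of {1,…,5}, an ε ∈ {0,1}, and a polynomial b ∈ 𝔽[t] coprime to D, such that for every monic irreducible a ∈ 𝔽[t] with a ≡ b (mod D) and deg(a) ≡ ε (mod 2), both of the following equations have solutions over 𝔽_q(t): a_{σ(1)}x² + a_{σ(2)}y² = P·a and −a_{σ(3)}u² − a_{σ(4)}v² − a_{σ(5)}w² = P·a, where P is the monic gcd of a_{σ(1)} and a_{σ(2)}. -/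

import Mathlib

open Polynomial

/-- `g` is the monic greatest common divisor of `p` and `q`. -/
def IsMonicGcd {F : Type*} [Field F] (p q g : F[X]) : Prop :=
  g.Monic ∧ g ∣ p ∧ g ∣ q ∧ ∀ r : F[X], r ∣ p → r ∣ q → r ∣ g

set_option linter.all false

section
open Polynomial
set_option linter.all false

/-- quadratic character of the finite field -/
noncomputable def chiF {F : Type*} [Field F] [Fintype F] (c : F) : ℤ :=
  @quadraticChar F _ _ (Classical.decEq F) c

/-- the Jacobi symbol `(x / f)` on polynomials, through the resultant -/
noncomputable def leg {F : Type*} [Field F] [Fintype F] (f x : F[X]) : ℤ :=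
  chiF (resultant f x)

section part1
variable {F : Type*} [Field F] [Fintype F]

lemma chiF_mul (c d : F) : chiF (c * d) = chiF c * chiF d := by
  unfold chiF; exact map_mul _ c d

lemma chiF_one : chiF (1 : F) = 1 := by simp [chiF]

lemma chiF_pow (c : F) (n : ℕ) : chiF (c ^ n) = chiF c ^ n := by
  unfold chiF; exact map_pow _ c n

lemma chiF_eq_zero {c : F} : chiF c = 0 ↔ c = 0 := by
  unfold chiF; exact @quadraticChar_eq_zero_iff F _ _ (Classical.decEq F) c

lemma chiF_sq {c : F} (h : c ≠ 0) : chiF c ^ 2 = 1 := by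
  unfold chiF; exact @quadraticChar_sq_one F _ _ (Classical.decEq F) c h

lemma chiF_mul_self {c : F} (h : c ≠ 0) : chiF c * chiF c = 1 := by
  rw [← sq, chiF_sq h]

lemma res_deg {f : F[X]} (hf : f.Monic) (x : F[X]) {n : ℕ} (hn : x.natDegree ≤ n) :
    resultant f x f.natDegree n = resultant f x := by
  obtain ⟨k, rfl⟩ := Nat.exists_eq_add_of_le hn
  rw [resultant_add_right_deg _ _ _ _ _ le_rfl]
  simp [hf]

lemma leg_mul {f : F[X]} (hf : f.Monic) (x y : F[X]) : leg f (x * y) = leg f x * leg f y := by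
  unfold leg
  rw [← chiF_mul, ← resultant_mul_right _ _ _ _ le_rfl, res_deg hf _ natDegree_mul_le]

lemma leg_mul_left {f g : F[X]} (hf : f.Monic) (hg : g.Monic) (x : F[X]) :
    leg (f * g) x = leg f x * leg g x := by
  unfold leg
  rw [← chiF_mul, ← resultant_mul_left _ _ _ _ le_rfl, hf.natDegree_mul hg]

lemma leg_C {f : F[X]} (hf : f.Monic) (c : F) : leg f (C c) = chiF c ^ f.natDegree := by
  unfold leg
  rw [resultant_C_right, hf.coeff_natDegree, one_pow, one_mul, chiF_pow]

lemma leg_one {f : F[X]} (hf : f.Monic) : leg f 1 = 1 := by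
  rw [← C_1, leg_C hf, chiF_one, one_pow]

lemma leg_one_left (x : F[X]) : leg 1 x = 1 := by
  unfold leg
  simp [chiF_one]

lemma leg_congr {f : F[X]} (hf : f.Monic) {x y : F[X]} (h : f ∣ x - y) : leg f x = leg f y := by
  obtain ⟨p, hp⟩ := h
  obtain rfl : x = y + f * p := by rw [← hp]; ring
  unfold leg
  have h1 := res_deg hf (y + f * p) (n := max y.natDegree (f.natDegree + p.natDegree))
    ((natDegree_add_le _ _).trans (max_le_max le_rfl natDegree_mul_le))
  rw [← h1, resultant_add_mul_right _ _ _ _ _ (by rw [add_comm]; exact le_max_right _ _) le_rfl,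
    res_deg hf _ (le_max_left _ _)]

lemma leg_recip {f g : F[X]} :
    leg f g = chiF (-1 : F) ^ (f.natDegree * g.natDegree) * leg g f := by
  unfold leg
  rw [resultant_comm, chiF_mul, chiF_pow]

lemma leg_eq_zero {f : F[X]} (hf : f.Monic) {x : F[X]} : leg f x = 0 ↔ ¬ IsCoprime f x := by
  unfold leg
  rw [chiF_eq_zero, resultant_eq_zero_iff]
  simp [hf.ne_zero]

lemma leg_sq {f : F[X]} (hf : f.Monic) {x : F[X]} (h : IsCoprime f x) : leg f x ^ 2 = 1 := by
  unfold leg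
  apply chiF_sq
  intro h0
  rw [resultant_eq_zero_iff] at h0
  exact h0.2 h

lemma leg_mul_self {f : F[X]} (hf : f.Monic) {x : F[X]} (h : IsCoprime f x) :
    leg f x * leg f x = 1 := by
  rw [← sq, leg_sq hf h]

lemma leg_pm {f : F[X]} (hf : f.Monic) {x : F[X]} (h : IsCoprime f x) :
    leg f x = 1 ∨ leg f x = -1 := sq_eq_one_iff.1 (leg_sq hf h)

lemma res_eq_norm {f : F[X]} (hf : f.Monic) (hi : Irreducible f) (x : F[X]) :
    resultant f x = Algebra.norm F (AdjoinRoot.mk f x) := by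
  haveI : Fact (Irreducible f) := ⟨hi⟩
  haveI : FiniteDimensional F (AdjoinRoot f) := hf.finite_adjoinRoot
  let E := AlgebraicClosure F
  apply (algebraMap F E).injective
  rw [Algebra.norm_eq_prod_embeddings F E, ← resultant_map_map]
  have h1 := resultant_eq_prod_eval (f.map (algebraMap F E)) (x.map (algebraMap F E)) x.natDegree
    (natDegree_map_le) (IsAlgClosed.splits _)
  rw [natDegree_map] at h1
  rw [h1, (hf.map _).leadingCoeff, one_pow, one_mul]
  have hsep : f.Separable := PerfectField.separable_of_irreducible hi
  have hnd : (f.aroots E).Nodup := nodup_roots hsep.map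
  have h2 : ∀ σ : AdjoinRoot f →ₐ[F] E, σ (AdjoinRoot.mk f x) =
      (x.map (algebraMap F E)).eval (σ (AdjoinRoot.root f)) := by
    intro σ
    rw [← AdjoinRoot.aeval_eq, ← Polynomial.aeval_algHom_apply, eval_map_algebraMap]
  simp_rw [h2]
  classical
  have h3 : ((f.map (algebraMap F E)).roots.map (x.map (algebraMap F E)).eval).prod
     = ∏ t ∈ (f.aroots E).toFinset, (x.map (algebraMap F E)).eval t := by
    rw [Finset.prod_multiset_map_count]
    refine Finset.prod_congr rfl fun t ht => ?_
    rw [Multiset.count_eq_one_of_mem hnd (Multiset.mem_toFinset.1 ht), pow_one]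
  rw [h3]
  symm
  refine Finset.prod_bij (fun σ _ => σ (AdjoinRoot.root f)) ?_ ?_ ?_ ?_
  · intro σ _
    rw [Multiset.mem_toFinset, mem_aroots]
    refine ⟨hf.ne_zero, ?_⟩
    rw [Polynomial.aeval_algHom_apply, AdjoinRoot.aeval_eq, AdjoinRoot.mk_self, map_zero]
  · intro σ _ τ _ h
    exact AdjoinRoot.algHom_ext h
  · intro t ht
    rw [Multiset.mem_toFinset, mem_aroots] at ht
    refine ⟨AdjoinRoot.liftAlgHom f (Algebra.ofId F E) t ht.2, Finset.mem_univ _, ?_⟩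
    exact AdjoinRoot.liftAlgHom_root (S := F) f (Algebra.ofId F E) t ht.2
  · intro _ _
    rfl

lemma leg_one_square (hodd : ringChar F ≠ 2) {f : F[X]} (hf : f.Monic) (hi : Irreducible f)
    {x : F[X]} (h : leg f x = 1) : ∃ r : F[X], f ∣ r ^ 2 - x := by
  haveI : Fact (Irreducible f) := ⟨hi⟩
  haveI : FiniteDimensional F (AdjoinRoot f) := hf.finite_adjoinRoot
  haveI : Finite (AdjoinRoot f) := Module.finite_of_finite F
  letI : Fintype (AdjoinRoot f) := Fintype.ofFinite _
  have hch : ringChar (AdjoinRoot f) ≠ 2 := by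
    rwa [← Algebra.ringChar_eq F (AdjoinRoot f)]
  have hsq : IsSquare (AdjoinRoot.mk f x) := by
    by_cases h0 : AdjoinRoot.mk f x = 0
    · rw [h0]; exact IsSquare.zero
    rw [FiniteField.isSquare_iff hch h0]
    unfold leg at h
    rw [res_eq_norm hf hi] at h
    have h1 := @quadraticChar_eq_pow_of_char_ne_two' F _ _ (Classical.decEq F) hodd
      (Algebra.norm F (AdjoinRoot.mk f x))
    unfold chiF at h
    rw [h] at h1
    have h2 := congrArg (algebraMap F (AdjoinRoot f)) h1
    rw [map_pow, FiniteField.algebraMap_norm_eq_pow, ← pow_mul] at h2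
    simp only [Int.cast_one, map_one] at h2
    rw [h2]
    congr 1
    rw [Nat.card_eq_fintype_card, Nat.card_eq_fintype_card]
    have h3 := FiniteField.odd_card_of_char_ne_two hodd
    have h4 := FiniteField.odd_card_of_char_ne_two hch
    have h5 : Fintype.card F - 1 ∣ Fintype.card (AdjoinRoot f) - 1 := by
      rw [Module.card_eq_pow_finrank (K := F) (V := AdjoinRoot f)]
      simpa using Nat.sub_dvd_pow_sub_pow (Fintype.card F) 1 (Module.finrank F (AdjoinRoot f))
    obtain ⟨k, hk⟩ := h5
    have h6 : 1 < Fintype.card F := Fintype.one_lt_card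
    obtain ⟨m, hm⟩ : ∃ m, Fintype.card F = 2 * m + 1 := ⟨Fintype.card F / 2, by omega⟩
    have hm0 : 0 < m := by omega
    rw [hk, Nat.mul_div_cancel_left _ (by omega)]
    have h7 : Fintype.card (AdjoinRoot f) = 2 * (m * k) + 1 := by
      have : Fintype.card F - 1 = 2 * m := by omega
      rw [this] at hk
      have := Fintype.card_pos (α := AdjoinRoot f)
      rw [mul_assoc] at hk
      omega
    have h8 : Fintype.card F / 2 = m := by omega
    rw [h7, h8, mul_comm k m]
    omega
  obtain ⟨r, hr⟩ := hsq
  obtain ⟨r, rfl⟩ := AdjoinRoot.mk_surjective r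
  refine ⟨r, ?_⟩
  rw [← AdjoinRoot.mk_eq_zero, map_sub, map_pow, hr]
  ring

lemma exists_leg_neg (hodd : ringChar F ≠ 2) {f : F[X]} (hf : f.Monic) (hi : Irreducible f) :
    ∃ c : F[X], leg f c = -1 := by
  haveI : Fact (Irreducible f) := ⟨hi⟩
  haveI : FiniteDimensional F (AdjoinRoot f) := hf.finite_adjoinRoot
  haveI : Finite (AdjoinRoot f) := Module.finite_of_finite F
  have hch : ringChar (AdjoinRoot f) ≠ 2 := by
    rwa [← Algebra.ringChar_eq F (AdjoinRoot f)]
  letI : Fintype (AdjoinRoot f) := Fintype.ofFinite _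
  obtain ⟨y, hy⟩ := FiniteField.exists_nonsquare hch
  obtain ⟨c, rfl⟩ := AdjoinRoot.mk_surjective y
  refine ⟨c, ?_⟩
  by_cases hc : IsCoprime f c
  · rcases leg_pm hf hc with h | h
    · exfalso
      obtain ⟨r, hr⟩ := leg_one_square hodd hf hi h
      apply hy
      refine ⟨AdjoinRoot.mk f r, ?_⟩
      rw [← AdjoinRoot.mk_eq_zero, map_sub, map_pow, sub_eq_zero] at hr
      rw [← hr, sq]
    · exact h
  · exfalso
    rw [hi.coprime_iff_not_dvd, not_not] at hc
    apply hy
    rw [AdjoinRoot.mk_eq_zero.2 hc]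
    exact IsSquare.zero

end part1

end

section
open Polynomial
set_option linter.all false

section part2
variable {F : Type*} [Field F] [Fintype F]

lemma exists_monic_assoc {π : F[X]} (h : Irreducible π) :
    ∃ f : F[X], f.Monic ∧ Irreducible f ∧ f ∣ π ∧ π ∣ f := by
  classical
  refine ⟨normalize π, monic_normalize h.ne_zero, ?_, ?_, ?_⟩
  · exact (normalize_associated π).irreducible_iff.2 h
  · exact (normalize_associated π).dvd
  · exact (normalize_associated π).symm.dvd

lemma sq_mod (hodd : ringChar F ≠ 2) (x α : F[X]) (hs : Squarefree α)
    (h : ∀ f : F[X], f.Monic → Irreducible f → f ∣ α → leg f x = 1) :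
    ∃ r : F[X], α ∣ r ^ 2 - x := by
  induction α using UniqueFactorizationMonoid.induction_on_prime with
  | h₁ => exact absurd hs not_squarefree_zero
  | h₂ a ha => exact ⟨0, ha.dvd⟩
  | h₃ a p ha hp ih =>
    obtain ⟨r2, hr2⟩ := ih (hs.squarefree_of_dvd (dvd_mul_left _ _))
      (fun f hf hi hd => h f hf hi (hd.mul_left _))
    obtain ⟨f, hf, hi, hfp, hpf⟩ := exists_monic_assoc hp.irreducible
    obtain ⟨r1, hr1⟩ := leg_one_square hodd hf hi (h f hf hi (hfp.mul_right _))
    replace hr1 := hpf.trans hr1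
    have hc : IsCoprime p a := (squarefree_mul_iff.1 hs).1.isCoprime
    obtain ⟨u, v, huv⟩ := id hc
    refine ⟨r2 * (u * p) + r1 * (v * a), hc.mul_dvd ?_ ?_⟩
    · have e : (r2 * (u * p) + r1 * (v * a)) ^ 2 - x = (r1 ^ 2 - x) +
        p * (u * (r2 - r1) * (r2 * (u * p) + r1 * (v * a) + r1)) := by
        have : v * a = 1 - u * p := by rw [← huv]; ring
        rw [this]; ring
      rw [e]
      exact dvd_add hr1 (dvd_mul_right _ _)
    · have e : (r2 * (u * p) + r1 * (v * a)) ^ 2 - x = (r2 ^ 2 - x) +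
        a * (v * (r1 - r2) * (r2 * (u * p) + r1 * (v * a) + r2)) := by
        have : u * p = 1 - v * a := by rw [← huv]; ring
        rw [this]; ring
      rw [e]
      exact dvd_add hr2 (dvd_mul_right _ _)

lemma tern_dvd {α β γ r x y z : F[X]} (hab : IsCoprime α β) (hr : α ∣ r ^ 2 - -(β * γ))
    (h : α ∣ β * y - r * z) : α ∣ α * x ^ 2 + β * y ^ 2 + γ * z ^ 2 := by
  apply hab.dvd_of_dvd_mul_left
  have e : β * (α * x ^ 2 + β * y ^ 2 + γ * z ^ 2) =
    α * (β * x ^ 2) + (β * y - r * z) * (β * y + r * z) + (r ^ 2 - -(β * γ)) * z ^ 2 := by ring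
  rw [e]
  exact dvd_add (dvd_add (dvd_mul_right _ _) (h.mul_right _)) (hr.mul_right _)

lemma tern_aux {α β γ ra rb rc : F[X]} (hα : α ≠ 0) (hβ : β ≠ 0) (hγ : γ ≠ 0)
    (hab : IsCoprime α β) (hac : IsCoprime α γ) (hbc : IsCoprime β γ)
    (ha : α ∣ ra ^ 2 - -(β * γ)) (hb : β ∣ rb ^ 2 - -(γ * α)) (hc : γ ∣ rc ^ 2 - -(α * β))
    (n : ℕ) (hn : n = α.natDegree + β.natDegree + γ.natDegree)
    (d1 d2 d3 : ℕ) (s1 s2 s3 c1 c2 c3 : F) (hs : s1 ≠ 0 ∨ s2 ≠ 0 ∨ s3 ≠ 0)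
    (hd : n ≤ d1 + d2 + d3) (hsum : c1 + c2 + c3 = 0)
    (h1 : ∀ p : F[X], p.degree < d1 → ∀ τ, (α * (p + C (τ * s1) * X ^ d1) ^ 2).natDegree ≤ n ∧
      (α * (p + C (τ * s1) * X ^ d1) ^ 2).coeff n = c1 * τ ^ 2)
    (h2 : ∀ p : F[X], p.degree < d2 → ∀ τ, (β * (p + C (τ * s2) * X ^ d2) ^ 2).natDegree ≤ n ∧
      (β * (p + C (τ * s2) * X ^ d2) ^ 2).coeff n = c2 * τ ^ 2)
    (h3 : ∀ p : F[X], p.degree < d3 → ∀ τ, (γ * (p + C (τ * s3) * X ^ d3) ^ 2).natDegree ≤ n ∧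
      (γ * (p + C (τ * s3) * X ^ d3) ^ 2).coeff n = c3 * τ ^ 2) :
    ∃ x y z : F[X], (x ≠ 0 ∨ y ≠ 0 ∨ z ≠ 0) ∧ α * x ^ 2 + β * y ^ 2 + γ * z ^ 2 = 0 := by
  let V := degreeLT F d1 × degreeLT F d2 × degreeLT F d3 × F
  have hfin : ∀ d, Module.finrank F (degreeLT F d) = d := by
    intro d
    rw [(degreeLTEquiv F d).finrank_eq, Module.finrank_fin_fun]
  have : ∀ d, Module.Finite F (degreeLT F d) := fun d =>
    Module.Finite.equiv (degreeLTEquiv F d).symm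
  have hV : Module.finrank F V = d1 + (d2 + (d3 + 1)) := by
    simp [V, Module.finrank_prod, hfin]
  let t : V →ₗ[F] F := LinearMap.snd F _ _ ∘ₗ LinearMap.snd F _ _ ∘ₗ LinearMap.snd F _ _
  let q1 : V →ₗ[F] F[X] := (degreeLT F d1).subtype ∘ₗ LinearMap.fst F _ _
  let q2 : V →ₗ[F] F[X] := (degreeLT F d2).subtype ∘ₗ LinearMap.fst F _ _ ∘ₗ LinearMap.snd F _ _
  let q3 : V →ₗ[F] F[X] := (degreeLT F d3).subtype ∘ₗ LinearMap.fst F _ _ ∘ₗ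
    LinearMap.snd F _ _ ∘ₗ LinearMap.snd F _ _
  let φ1 : V →ₗ[F] F[X] := q1 + monomial d1 ∘ₗ (s1 • t)
  let φ2 : V →ₗ[F] F[X] := q2 + monomial d2 ∘ₗ (s2 • t)
  let φ3 : V →ₗ[F] F[X] := q3 + monomial d3 ∘ₗ (s3 • t)
  have e1 : ∀ v, φ1 v = (v.1 : F[X]) + C (v.2.2.2 * s1) * X ^ d1 := by
    intro v
    rw [C_mul_X_pow_eq_monomial, mul_comm]
    rfl
  have e2 : ∀ v, φ2 v = (v.2.1 : F[X]) + C (v.2.2.2 * s2) * X ^ d2 := by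
    intro v
    rw [C_mul_X_pow_eq_monomial, mul_comm]
    rfl
  have e3 : ∀ v, φ3 v = (v.2.2.1 : F[X]) + C (v.2.2.2 * s3) * X ^ d3 := by
    intro v
    rw [C_mul_X_pow_eq_monomial, mul_comm]
    rfl
  let M : ∀ f : F[X], F[X] →ₗ[F] AdjoinRoot f := fun f => (AdjoinRoot.mkₐ f).toLinearMap
  have hM : ∀ f x, M f x = AdjoinRoot.mk f x := fun f x => rfl
  let Ψ : V →ₗ[F] AdjoinRoot α × AdjoinRoot β × AdjoinRoot γ :=
    (M α ∘ₗ (LinearMap.mulLeft F β ∘ₗ φ2 - LinearMap.mulLeft F ra ∘ₗ φ3)).prod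
      ((M β ∘ₗ (LinearMap.mulLeft F γ ∘ₗ φ3 - LinearMap.mulLeft F rb ∘ₗ φ1)).prod
      (M γ ∘ₗ (LinearMap.mulLeft F α ∘ₗ φ1 - LinearMap.mulLeft F rc ∘ₗ φ2)))
  have hfα : Module.Finite F (AdjoinRoot α) := (AdjoinRoot.powerBasis hα).finite
  have hfβ : Module.Finite F (AdjoinRoot β) := (AdjoinRoot.powerBasis hβ).finite
  have hfγ : Module.Finite F (AdjoinRoot γ) := (AdjoinRoot.powerBasis hγ).finite
  have hT : Module.finrank F (AdjoinRoot α × AdjoinRoot β × AdjoinRoot γ) = n := by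
    rw [Module.finrank_prod, Module.finrank_prod, (AdjoinRoot.powerBasis hα).finrank,
      (AdjoinRoot.powerBasis hβ).finrank, (AdjoinRoot.powerBasis hγ).finrank]
    simp [hn, add_assoc]
  have hker : LinearMap.ker Ψ ≠ ⊥ := by
    apply LinearMap.ker_ne_bot_of_finrank_lt
    rw [hT, hV]; omega
  obtain ⟨v, hv, hv0⟩ := (Submodule.ne_bot_iff _).1 hker
  rw [LinearMap.mem_ker] at hv
  have g1 : α ∣ β * φ2 v - ra * φ3 v := by
    rw [← AdjoinRoot.mk_eq_zero]; exact congrArg Prod.fst hv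
  have g2 : β ∣ γ * φ3 v - rb * φ1 v := by
    rw [← AdjoinRoot.mk_eq_zero]; exact congrArg (fun w => w.2.1) hv
  have g3 : γ ∣ α * φ1 v - rc * φ2 v := by
    rw [← AdjoinRoot.mk_eq_zero]; exact congrArg (fun w => w.2.2) hv
  refine ⟨φ1 v, φ2 v, φ3 v, ?_, ?_⟩
  · by_contra hcon
    push Not at hcon
    obtain ⟨z1, z2, z3⟩ := hcon
    rw [e1] at z1
    rw [e2] at z2
    rw [e3] at z3
    have m1 := mem_degreeLT.1 v.1.2
    have m2 := mem_degreeLT.1 v.2.1.2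
    have m3 := mem_degreeLT.1 v.2.2.1.2
    have k1 := congrArg (fun p => coeff p d1) z1
    have k2 := congrArg (fun p => coeff p d2) z2
    have k3 := congrArg (fun p => coeff p d3) z3
    simp only [coeff_add, coeff_C_mul, coeff_X_pow, if_true, mul_one, coeff_zero,
      coeff_eq_zero_of_degree_lt m1, coeff_eq_zero_of_degree_lt m2,
      coeff_eq_zero_of_degree_lt m3, zero_add] at k1 k2 k3
    have ht : v.2.2.2 = 0 := by
      rcases hs with hs | hs | hs
      · exact (mul_eq_zero.1 k1).resolve_right hs
      · exact (mul_eq_zero.1 k2).resolve_right hs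
      · exact (mul_eq_zero.1 k3).resolve_right hs
    simp only [ht, zero_mul, map_zero, add_zero] at z1 z2 z3
    apply hv0
    ext1
    · exact Subtype.ext z1
    ext1
    · exact Subtype.ext z2
    ext1
    · exact Subtype.ext z3
    exact ht
  · set Q := α * φ1 v ^ 2 + β * φ2 v ^ 2 + γ * φ3 v ^ 2 with hQ
    have w1 : α ∣ Q := tern_dvd hab ha g1
    have w2 : β ∣ Q := by
      have := tern_dvd (x := φ2 v) hbc hb g2
      rw [hQ]; convert this using 1; ring
    have w3 : γ ∣ Q := by
      have := tern_dvd (x := φ3 v) hac.symm hc g3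
      rw [hQ]; convert this using 1; ring
    have w : α * β * γ ∣ Q := (hac.mul_left hbc).mul_dvd (hab.mul_dvd w1 w2) w3
    obtain ⟨l1, o1⟩ := h1 _ (mem_degreeLT.1 v.1.2) v.2.2.2
    obtain ⟨l2, o2⟩ := h2 _ (mem_degreeLT.1 v.2.1.2) v.2.2.2
    obtain ⟨l3, o3⟩ := h3 _ (mem_degreeLT.1 v.2.2.1.2) v.2.2.2
    rw [← e1] at l1 o1
    rw [← e2] at l2 o2
    rw [← e3] at l3 o3
    refine eq_zero_of_dvd_of_degree_lt w ?_
    have hdn : (α * β * γ).degree = n := by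
      rw [degree_eq_natDegree (by simp [hα, hβ, hγ]), natDegree_mul (by simp [hα, hβ]) hγ,
        natDegree_mul hα hβ, hn]
    rw [hdn, degree_lt_iff_coeff_zero]
    intro m hm
    rcases eq_or_lt_of_le hm with rfl | hm
    · rw [hQ, coeff_add, coeff_add, o1, o2, o3]
      linear_combination v.2.2.2 ^ 2 * hsum
    · rw [hQ, coeff_add, coeff_add, coeff_eq_zero_of_natDegree_lt (l1.trans_lt hm),
        coeff_eq_zero_of_natDegree_lt (l2.trans_lt hm),
        coeff_eq_zero_of_natDegree_lt (l3.trans_lt hm)]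
      simp

lemma term_natDegree {d : ℕ} {p : F[X]} (hp : p.degree < d) (s : F) :
    (p + C s * X ^ d).natDegree ≤ d := by
  refine (natDegree_add_le _ _).trans (max_le ?_ (natDegree_C_mul_X_pow_le _ _))
  exact natDegree_le_of_degree_le hp.le

lemma term_top {α : F[X]} {d n : ℕ} (h : 2 * d + α.natDegree = n) (s : F) (p : F[X])
    (hp : p.degree < d) (τ : F) :
    (α * (p + C (τ * s) * X ^ d) ^ 2).natDegree ≤ n ∧
      (α * (p + C (τ * s) * X ^ d) ^ 2).coeff n = (α.leadingCoeff * s ^ 2) * τ ^ 2 := by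
  have hx := term_natDegree hp (τ * s)
  have hx2 : ((p + C (τ * s) * X ^ d) ^ 2).natDegree ≤ 2 * d :=
    natDegree_pow_le.trans (by omega)
  constructor
  · exact natDegree_mul_le.trans (by omega)
  · have hn : n = α.natDegree + 2 * d := by omega
    rw [hn, coeff_mul_add_eq_of_natDegree_le le_rfl hx2, coeff_pow_of_natDegree_le hx]
    simp only [coeff_add, coeff_C_mul, coeff_X_pow, if_true, mul_one,
      coeff_eq_zero_of_degree_lt hp, zero_add]
    rw [leadingCoeff]; ring

lemma term_small {α : F[X]} {d n : ℕ} (h : 2 * d + α.natDegree + 1 ≤ n) (s : F) (p : F[X])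
    (hp : p.degree < d) (τ : F) :
    (α * (p + C (τ * s) * X ^ d) ^ 2).natDegree ≤ n ∧
      (α * (p + C (τ * s) * X ^ d) ^ 2).coeff n = 0 * τ ^ 2 := by
  have hx := term_natDegree hp (τ * s)
  have hx2 : ((p + C (τ * s) * X ^ d) ^ 2).natDegree ≤ 2 * d :=
    natDegree_pow_le.trans (by omega)
  have h3 := natDegree_mul_le (p := α) (q := (p + C (τ * s) * X ^ d) ^ 2)
  constructor
  · omega
  · rw [coeff_eq_zero_of_natDegree_lt (by omega), zero_mul]

lemma term_zero {α : F[X]} {d n : ℕ} (h : 2 * d + α.natDegree ≤ n + 1) (p : F[X])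
    (hp : p.degree < d) (τ : F) :
    (α * (p + C (τ * 0) * X ^ d) ^ 2).natDegree ≤ n ∧
      (α * (p + C (τ * 0) * X ^ d) ^ 2).coeff n = 0 * τ ^ 2 := by
  simp only [mul_zero, map_zero, zero_mul, add_zero]
  by_cases hp0 : p = 0
  · simp [hp0]
  have h1 : p.natDegree < d := (natDegree_lt_iff_degree_lt hp0).2 hp
  have hx2 : (p ^ 2).natDegree ≤ 2 * p.natDegree := natDegree_pow_le
  have h3 := natDegree_mul_le (p := α) (q := p ^ 2)
  constructor
  · omega
  · rw [coeff_eq_zero_of_natDegree_lt (by omega)]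

/-- three-variable Legendre theorem over `F[X]` -/
lemma legendre_tern (hodd : ringChar F ≠ 2) {α β γ : F[X]}
    (sα : Squarefree α) (sβ : Squarefree β) (sγ : Squarefree γ)
    (hab : IsCoprime α β) (hac : IsCoprime α γ) (hbc : IsCoprime β γ)
    (ha : ∀ f : F[X], f.Monic → Irreducible f → f ∣ α → leg f (-(β * γ)) = 1)
    (hb : ∀ f : F[X], f.Monic → Irreducible f → f ∣ β → leg f (-(α * γ)) = 1)
    (hc : ∀ f : F[X], f.Monic → Irreducible f → f ∣ γ → leg f (-(α * β)) = 1) :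
    ∃ x y z : F[X], (x ≠ 0 ∨ y ≠ 0 ∨ z ≠ 0) ∧ α * x ^ 2 + β * y ^ 2 + γ * z ^ 2 = 0 := by
  obtain ⟨ra, hra⟩ := sq_mod hodd _ _ sα ha
  obtain ⟨rb, hrb⟩ := sq_mod hodd _ _ sβ hb
  obtain ⟨rc, hrc⟩ := sq_mod hodd _ _ sγ hc
  rw [mul_comm α γ] at hrb
  have aux := tern_aux sα.ne_zero sβ.ne_zero sγ.ne_zero hab hac hbc hra hrb hrc _ rfl
  set i := α.natDegree with hi
  set j := β.natDegree with hj
  set k := γ.natDegree with hk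
  by_cases h1 : i % 2 = j % 2
  · by_cases h2 : i % 2 = k % 2
    · -- all of the same parity
      have hα : α.leadingCoeff ≠ 0 := leadingCoeff_ne_zero.2 sα.ne_zero
      have hβ : β.leadingCoeff ≠ 0 := leadingCoeff_ne_zero.2 sβ.ne_zero
      obtain ⟨u, v, huv⟩ := FiniteField.exists_root_sum_quadratic (R := F)
        (f := C α.leadingCoeff * X ^ 2 + C γ.leadingCoeff) (g := C β.leadingCoeff * X ^ 2)
        (by compute_degree!; exact sα.ne_zero) (by compute_degree!; exact sβ.ne_zero) (FiniteField.odd_card_of_char_ne_two hodd)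
      simp only [eval_add, eval_mul, eval_C, eval_pow, eval_X] at huv
      refine aux ((j + k) / 2) ((i + k) / 2) ((i + j) / 2) u v 1 _ _ _
        (Or.inr (Or.inr one_ne_zero)) (by omega) ?_
        (term_top (by omega) u) (term_top (by omega) v) (term_top (by omega) 1)
      linear_combination huv
    · exact aux ((j + k) / 2) ((i + k + 1) / 2) ((i + j) / 2) 1 0 0 0 0 0
        (Or.inl one_ne_zero) (by omega) (by ring)
        (term_small (by omega) _) (term_zero (by omega)) (term_zero (by omega))
  · by_cases h2 : i % 2 = k % 2
    · exact aux ((j + k) / 2) ((i + k) / 2) ((i + j + 1) / 2) 1 0 0 0 0 0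
        (Or.inl one_ne_zero) (by omega) (by ring)
        (term_small (by omega) _) (term_zero (by omega)) (term_zero (by omega))
    · exact aux ((j + k) / 2) ((i + k) / 2) ((i + j + 1) / 2) 0 1 0 0 0 0
        (Or.inr (Or.inl one_ne_zero)) (by omega) (by ring)
        (term_zero (by omega)) (term_small (by omega) _) (term_zero (by omega))

end part2

end

section
open Polynomial
set_option linter.all false
variable {F : Type*} [Field F] [Fintype F]

lemma leg_eq_one_of_primes (y x : F[X]) (hy : y.Monic)
    (h : ∀ f : F[X], f.Monic → Irreducible f → f ∣ y → leg f x = 1) : leg y x = 1 := by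
  induction hn : y.natDegree using Nat.strong_induction_on generalizing y with
  | _ n ih =>
    by_cases hy1 : y = 1
    · rw [hy1, leg_one_left]
    have hu : ¬ IsUnit y := fun hu => hy1 (hy.eq_one_of_isUnit hu)
    obtain ⟨g, hg, hgi, hgy⟩ := exists_monic_irreducible_factor y hu
    obtain ⟨z, rfl⟩ := hgy
    have hz : z.Monic := hg.of_mul_monic_left hy
    rw [leg_mul_left hg hz, h g hg hgi (dvd_mul_right _ _), one_mul]
    have hd : 0 < g.natDegree := hgi.natDegree_pos
    have := hg.natDegree_mul hz
    exact ih _ (by omega) z hz (fun f h1 h2 h3 => h f h1 h2 (h3.mul_left g)) rfl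

lemma pm_pow {s : ℤ} (h : s = 1 ∨ s = -1) (n : ℕ) : s ^ n = if n % 2 = 0 then 1 else s := by
  rcases Nat.even_or_odd n with h1 | h1
  · rw [if_pos (Nat.even_iff.1 h1)]
    rcases h with rfl | rfl <;> simp [h1]
  · rw [if_neg (by rw [Nat.odd_iff.1 h1]; simp)]
    rcases h with rfl | rfl <;> simp [h1]

lemma chiF_pm {c : F} (h : c ≠ 0) : chiF c = 1 ∨ chiF c = -1 := by
  have := chiF_sq h
  exact sq_eq_one_iff.1 this

/-- sign condition at the infinite place -/
def InfOK (α β γ : F[X]) : Prop :=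
  (α.natDegree % 2 = β.natDegree % 2 ∧ α.natDegree % 2 = γ.natDegree % 2) ∨
  (α.natDegree % 2 = γ.natDegree % 2 ∧ chiF (-(α.leadingCoeff * γ.leadingCoeff)) = 1)

lemma recip_core {x y z : F[X]} (hx : x.Monic) (hy : y.Monic) (hz : z.Monic)
    (hxy : IsCoprime x y) (hxz : IsCoprime x z) (hyz : IsCoprime y z)
    {a b c : F} (ha : a ≠ 0) (hb : b ≠ 0) (hc : c ≠ 0)
    (hinf : (x.natDegree % 2 = y.natDegree % 2 ∧ x.natDegree % 2 = z.natDegree % 2) ∨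
      (x.natDegree % 2 = z.natDegree % 2 ∧ chiF (-(a * c)) = 1)) :
    leg x (C (-(b * c)) * (y * z)) * leg y (C (-(a * c)) * (x * z)) *
      leg z (C (-(a * b)) * (x * y)) = 1 := by
  rw [leg_mul hx, leg_mul hx, leg_mul hy, leg_mul hy, leg_mul hz, leg_mul hz,
    leg_C hx, leg_C hy, leg_C hz, leg_recip (f := y) (g := x), leg_recip (f := z) (g := x), leg_recip (f := z) (g := y)]
  have h1 := leg_pm hx hxy
  have h2 := leg_pm hx hxz
  have h3 := leg_pm hy hyz
  have hn : ∀ d : F, -d = (-1) * d := fun d => by ring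
  rw [hn (b * c), hn (a * c), hn (a * b)] at *
  simp only [chiF_mul] at *
  have hs : chiF (-1 : F) = 1 ∨ chiF (-1 : F) = -1 := chiF_pm (by simp)
  have hA := chiF_pm ha
  have hB := chiF_pm hb
  have hC := chiF_pm hc
  generalize chiF (-1 : F) = s at *
  generalize chiF a = A at *
  generalize chiF b = B at *
  generalize chiF c = D at *
  generalize leg x y = l1 at *
  generalize leg x z = l2 at *
  generalize leg y z = l3 at *
  generalize x.natDegree = i at *
  generalize y.natDegree = j at *
  generalize z.natDegree = k at *
  have e : (s * (B * D)) ^ i * (l1 * l2) * ((s * (A * D)) ^ j * (s ^ (j * i) * l1 * l3)) *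
      ((s * (A * B)) ^ k * (s ^ (k * i) * l2 * (s ^ (k * j) * l3))) =
      (l1 ^ 2 * l2 ^ 2 * l3 ^ 2) * (s ^ (i + j + k + i * j + i * k + j * k) *
        A ^ (j + k) * B ^ (i + k) * D ^ (i + j)) := by
    simp only [mul_pow]; ring
  rw [e]
  have q1 : l1 ^ 2 = 1 := by rcases h1 with rfl | rfl <;> rfl
  have q2 : l2 ^ 2 = 1 := by rcases h2 with rfl | rfl <;> rfl
  have q3 : l3 ^ 2 = 1 := by rcases h3 with rfl | rfl <;> rfl
  rw [q1, q2, q3, pm_pow hs, pm_pow hA, pm_pow hB, pm_pow hC]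
  clear e q1 q2 q3 h1 h2 h3
  have r1 : (i + j + k + i * j + i * k + j * k) % 2 = (i % 2 + j % 2 + k % 2 + (i % 2) * (j % 2) + (i % 2) * (k % 2) + (j % 2) * (k % 2)) % 2 := by
    simp [Nat.add_mod, Nat.mul_mod]
  have r2 := Nat.add_mod j k 2
  have r3 := Nat.add_mod i k 2
  have r4 := Nat.add_mod i j 2
  rw [r1, r2, r3, r4]
  rcases Nat.mod_two_eq_zero_or_one i with hi | hi <;>
  rcases Nat.mod_two_eq_zero_or_one j with hj | hj <;>
  rcases Nat.mod_two_eq_zero_or_one k with hk | hk <;>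
  simp only [hi, hj, hk] at hinf ⊢ <;>
  rcases hs with rfl | rfl <;> rcases hA with rfl | rfl <;> rcases hB with rfl | rfl <;>
  rcases hC with rfl | rfl <;> first | (norm_num; done) | (exfalso; revert hinf; norm_num; done)

lemma monic_part {α : F[X]} (h : α ≠ 0) :
    ∃ x : F[X], x.Monic ∧ α = C α.leadingCoeff * x ∧ x ∣ α ∧ x.natDegree = α.natDegree := by
  have h0 : α.leadingCoeff ≠ 0 := leadingCoeff_ne_zero.2 h
  have e : α = C α.leadingCoeff * (C α.leadingCoeff⁻¹ * α) := by
    rw [← mul_assoc, ← C_mul, mul_inv_cancel₀ h0, C_1, one_mul]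
  refine ⟨C α.leadingCoeff⁻¹ * α, ?_, e, ⟨C α.leadingCoeff, by rw [mul_comm]; exact e⟩, ?_⟩
  · rw [mul_comm]; exact monic_mul_leadingCoeff_inv h
  · rw [natDegree_C_mul (inv_ne_zero h0)]

lemma tern_iso (hodd : ringChar F ≠ 2) {α β γ π : F[X]}
    (sα : Squarefree α) (sβ : Squarefree β) (sγ : Squarefree γ)
    (hπ : π.Monic) (hπi : Irreducible π)
    (hab : IsCoprime α β) (hac : IsCoprime α γ) (hbc : IsCoprime β γ)
    (haπ : IsCoprime α π) (hbπ : IsCoprime β π) (hcπ : IsCoprime γ π)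
    (ha : ∀ f : F[X], f.Monic → Irreducible f → f ∣ α → leg f (-(β * (γ * π))) = 1)
    (hb : ∀ f : F[X], f.Monic → Irreducible f → f ∣ β → leg f (-(α * (γ * π))) = 1)
    (hc : ∀ f : F[X], f.Monic → Irreducible f → f ∣ γ → leg f (-(α * β)) = 1)
    (hinf : InfOK α β (γ * π)) :
    ∃ x y z : F[X], (x ≠ 0 ∨ y ≠ 0 ∨ z ≠ 0) ∧ α * x ^ 2 + β * y ^ 2 + γ * π * z ^ 2 = 0 := by
  have sγπ : Squarefree (γ * π) :=
    (squarefree_mul_iff.2 ⟨hcπ.isRelPrime, sγ, hπi.squarefree⟩)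
  have hacπ := hac.mul_right haπ
  have hbcπ := hbc.mul_right hbπ
  have key : leg π (-(α * β)) = 1 := by
    obtain ⟨x, hx, ex, dx, nx⟩ := monic_part sα.ne_zero
    obtain ⟨y, hy, ey, dy, ny⟩ := monic_part sβ.ne_zero
    obtain ⟨z, hz, ez, dz, nz⟩ := monic_part sγ.ne_zero
    have e1 := leg_eq_one_of_primes x _ hx fun f h1 h2 h3 => ha f h1 h2 (h3.trans dx)
    have e2 := leg_eq_one_of_primes y _ hy fun f h1 h2 h3 => hb f h1 h2 (h3.trans dy)
    have e3 := leg_eq_one_of_primes z _ hz fun f h1 h2 h3 => hc f h1 h2 (h3.trans dz)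
    have hzp : z * π ∣ γ * π := mul_dvd_mul_right dz π
    have lγ : (γ * π).leadingCoeff = γ.leadingCoeff := by
      rw [leadingCoeff_mul, hπ.leadingCoeff, mul_one]
    have nγ : (z * π).natDegree = (γ * π).natDegree := by
      rw [hz.natDegree_mul hπ, natDegree_mul sγ.ne_zero hπ.ne_zero, nz]
    have core := recip_core hx hy (hz.mul hπ)
      (hab.of_isCoprime_of_dvd_left dx |>.of_isCoprime_of_dvd_right dy)
      (hacπ.of_isCoprime_of_dvd_left dx |>.of_isCoprime_of_dvd_right hzp)
      (hbcπ.of_isCoprime_of_dvd_left dy |>.of_isCoprime_of_dvd_right hzp)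
      (leadingCoeff_ne_zero.2 sα.ne_zero) (leadingCoeff_ne_zero.2 sβ.ne_zero)
      (leadingCoeff_ne_zero.2 sγ.ne_zero)
      (by unfold InfOK at hinf; rw [lγ] at hinf; rw [nx, ny, nγ]; exact hinf)
    have t1 : -(β * (γ * π)) = C (-(β.leadingCoeff * γ.leadingCoeff)) * (y * (z * π)) := by
      conv_lhs => rw [ey, ez]
      simp only [C_neg, C_mul]; ring
    have t2 : -(α * (γ * π)) = C (-(α.leadingCoeff * γ.leadingCoeff)) * (x * (z * π)) := by
      conv_lhs => rw [ex, ez]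
      simp only [C_neg, C_mul]; ring
    have t3 : -(α * β) = C (-(α.leadingCoeff * β.leadingCoeff)) * (x * y) := by
      conv_lhs => rw [ex, ey]
      simp only [C_neg, C_mul]; ring
    rw [← t1, ← t2, ← t3, e1, e2, leg_mul_left hz hπ, e3] at core
    simpa using core
  refine legendre_tern hodd sα sβ sγπ hab hacπ hbcπ ha hb ?_
  intro f hf hfi hd
  rcases hfi.prime.dvd_or_dvd hd with h | h
  · exact hc f hf hfi h
  · have : f = π := eq_of_monic_of_associated hf hπ (hfi.associated_of_dvd hπi h)
    rw [this, key]

end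

section
open Polynomial
set_option linter.all false
variable {F : Type*} [Field F] [Fintype F]

lemma low_finite (k : ℕ) : ((degreeLT F k : Submodule F F[X]) : Set F[X]).Finite := by
  have : Finite (degreeLT F k) := Finite.of_equiv _ (degreeLTEquiv F k).symm.toEquiv
  exact Set.toFinite _

/-- polynomials of degree `< k` -/
noncomputable def Low (F : Type*) [Field F] [Fintype F] (k : ℕ) : Finset F[X] :=
  (low_finite (F := F) k).toFinset

open Classical in
/-- monic polynomials of degree `k` -/
noncomputable def Mon (F : Type*) [Field F] [Fintype F] (k : ℕ) : Finset F[X] :=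
  (Low F k).image (fun r => X ^ k + r)

lemma mem_Low {k : ℕ} {r : F[X]} : r ∈ Low F k ↔ r.degree < k := by
  simp [Low, mem_degreeLT]

lemma card_Low (k : ℕ) : (Low F k).card = Fintype.card F ^ k := by
  have h1 : (Low F k).card = Nat.card (degreeLT F k) := by
    unfold Low
    rw [← Set.ncard_eq_toFinset_card _ (low_finite (F := F) k)]
    rfl
  rw [h1, Nat.card_congr (degreeLTEquiv F k).toEquiv]
  simp

lemma mem_Mon {k : ℕ} {m : F[X]} : m ∈ Mon F k ↔ m.Monic ∧ m.natDegree = k := by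
  classical
  unfold Mon
  rw [Finset.mem_image]
  constructor
  · rintro ⟨r, hr, rfl⟩
    rw [mem_Low] at hr
    exact ⟨monic_X_pow_add hr, by
      rw [natDegree_add_eq_left_of_degree_lt (by rw [degree_X_pow]; exact hr), natDegree_X_pow]⟩
  · rintro ⟨h1, h2⟩
    refine ⟨m - X ^ k, ?_, by ring⟩
    rw [mem_Low]
    have h3 : m.degree = k := by rw [degree_eq_natDegree h1.ne_zero, h2]
    have := degree_sub_lt (p := m) (q := X ^ k) (by rw [h3, degree_X_pow]) h1.ne_zero
      (by rw [h1.leadingCoeff, leadingCoeff_X_pow])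
    rwa [h3] at this

lemma card_Mon (k : ℕ) : (Mon F k).card = Fintype.card F ^ k := by
  classical
  unfold Mon
  rw [Finset.card_image_of_injective _ (add_right_injective _), card_Low]

/-- multiplicative function on monic polynomials -/
structure IsChr (ψ : F[X] → ℚ) : Prop where
  one : ψ 1 = 1
  mul : ∀ x y : F[X], x.Monic → y.Monic → ψ (x * y) = ψ x * ψ y

lemma IsChr.pow {ψ : F[X] → ℚ} (h : IsChr ψ) {x : F[X]} (hx : x.Monic) (n : ℕ) :
    ψ (x ^ n) = ψ x ^ n := by
  induction n with
  | zero => simp [h.one]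
  | succ n ih => rw [pow_succ, h.mul _ _ (hx.pow n) hx, ih, pow_succ]

noncomputable def Lc (ψ : F[X] → ℚ) (n : ℕ) : ℚ := ∑ m ∈ Mon F n, ψ m

open Classical in
/-- monic irreducibles of degree `≤ n` -/
noncomputable def Pr (F : Type*) [Field F] [Fintype F] (n : ℕ) : Finset F[X] :=
  ((Finset.range (n + 1)).biUnion (Mon F)).filter Irreducible

lemma mem_Pr {n : ℕ} {p : F[X]} : p ∈ Pr F n ↔ p.Monic ∧ Irreducible p ∧ p.natDegree ≤ n := by
  simp only [Pr, Finset.mem_filter, Finset.mem_biUnion, Finset.mem_range, mem_Mon]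
  constructor
  · rintro ⟨⟨k, hk, h1, h2⟩, h3⟩; exact ⟨h1, h3, by omega⟩
  · rintro ⟨h1, h2, h3⟩; exact ⟨⟨_, by omega, h1, rfl⟩, h2⟩

noncomputable def Nc (ψ : F[X] → ℚ) (k : ℕ) : ℚ :=
  ∑ p ∈ Pr F k, ∑ j ∈ Finset.Icc 1 k, if j * p.natDegree = k then p.natDegree * ψ p ^ j else 0

lemma Nc_eq (ψ : F[X] → ℚ) {k n : ℕ} (h : k ≤ n) :
    Nc ψ k = ∑ p ∈ Pr F n, ∑ j ∈ Finset.Icc 1 n,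
      if j * p.natDegree = k then p.natDegree * ψ p ^ j else 0 := by
  unfold Nc
  have h1 : ∀ p ∈ Pr F k, (∑ j ∈ Finset.Icc 1 k,
      if j * p.natDegree = k then p.natDegree * ψ p ^ j else 0) =
      ∑ j ∈ Finset.Icc 1 n, if j * p.natDegree = k then p.natDegree * ψ p ^ j else 0 := by
    intro p hp
    apply Finset.sum_subset (Finset.Icc_subset_Icc_right h)
    intro j hj hj'
    rw [if_neg]
    intro e
    have hpos := (mem_Pr.1 hp).2.1.natDegree_pos
    apply hj'
    rw [Finset.mem_Icc] at hj ⊢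
    exact ⟨hj.1, by nlinarith⟩
  rw [Finset.sum_congr rfl h1]
  apply Finset.sum_subset
  · intro p hp; rw [mem_Pr] at hp ⊢; exact ⟨hp.1, hp.2.1, by omega⟩
  · intro p hp hp'
    apply Finset.sum_eq_zero
    intro j hj
    rw [if_neg]
    intro e
    rw [mem_Pr] at hp hp'
    rw [Finset.mem_Icc] at hj
    exact hp' ⟨hp.1, hp.2.1, by nlinarith⟩

open Classical in
lemma sum_dvd {ψ : F[X] → ℚ} (hψ : IsChr ψ) {g : F[X]} (hg : g.Monic) (n : ℕ) :
    (∑ m ∈ Mon F n, if g ∣ m then ψ m else 0) =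
      if g.natDegree ≤ n then ψ g * Lc ψ (n - g.natDegree) else 0 := by
  rw [← Finset.sum_filter]
  split_ifs with h
  · unfold Lc
    rw [Finset.mul_sum]
    symm
    apply Finset.sum_bij (fun e _ => g * e)
    · intro e he
      rw [mem_Mon] at he
      rw [Finset.mem_filter, mem_Mon]
      exact ⟨⟨hg.mul he.1, by rw [hg.natDegree_mul he.1]; omega⟩, dvd_mul_right _ _⟩
    · intro e _ e' _ h; exact mul_left_cancel₀ hg.ne_zero h
    · intro m hm
      rw [Finset.mem_filter, mem_Mon] at hm
      obtain ⟨⟨h1, h2⟩, e, rfl⟩ := hm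
      have he := hg.of_mul_monic_left h1
      rw [hg.natDegree_mul he] at h2
      exact ⟨e, mem_Mon.2 ⟨he, by omega⟩, rfl⟩
    · intro e he
      rw [hψ.mul _ _ hg (mem_Mon.1 he).1]
  · apply Finset.sum_eq_zero
    intro m hm
    rw [Finset.mem_filter, mem_Mon] at hm
    exact absurd ((natDegree_le_of_dvd hm.2 hm.1.1.ne_zero).trans hm.1.2.le) h

open Classical in
lemma deg_sum {m : F[X]} (hm : m.Monic) {n : ℕ} (hn : m.natDegree = n) :
    (∑ p ∈ Pr F n, ∑ j ∈ Finset.Icc 1 n, if p ^ j ∣ m then (p.natDegree : ℚ) else 0) = n := by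
  set s := UniqueFactorizationMonoid.normalizedFactors m with hs
  have hprime : ∀ p ∈ s, p.Monic ∧ Irreducible p ∧ p ∣ m := by
    intro p hp
    have hi := UniqueFactorizationMonoid.irreducible_of_normalized_factor p hp
    refine ⟨?_, hi, UniqueFactorizationMonoid.dvd_of_mem_normalizedFactors hp⟩
    rw [← UniqueFactorizationMonoid.normalize_normalized_factor p hp]
    exact monic_normalize hi.ne_zero
  have hprod : s.prod = m := by
    apply eq_of_monic_of_associated ?_ hm
      (UniqueFactorizationMonoid.prod_normalizedFactors hm.ne_zero)
    have := monic_multiset_prod_of_monic s id (fun p hp => (hprime p hp).1)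
    simpa using this
  have hdeg : n = (s.map natDegree).sum := by
    rw [← hn]
    conv_lhs => rw [← hprod]
    exact natDegree_multiset_prod_of_monic s (fun p hp => (hprime p hp).1)
  have hcount : ∀ p ∈ Pr F n, (∑ j ∈ Finset.Icc 1 n, if p ^ j ∣ m then (p.natDegree : ℚ) else 0)
      = s.count p * p.natDegree := by
    intro p hp
    rw [mem_Pr] at hp
    have key : ∀ j, p ^ j ∣ m ↔ j ≤ s.count p := by
      intro j
      rw [pow_dvd_iff_le_emultiplicity,
        UniqueFactorizationMonoid.emultiplicity_eq_count_normalizedFactors hp.2.1 hm.ne_zero,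
        hp.1.normalize_eq_self]
      exact Nat.cast_le
    have hle : s.count p ≤ n := by
      have h1 := natDegree_le_of_dvd ((key _).2 le_rfl) hm.ne_zero
      rw [hp.1.natDegree_pow, hn] at h1
      have := hp.2.1.natDegree_pos
      nlinarith
    rw [← Finset.sum_filter, Finset.sum_const, nsmul_eq_mul]
    congr 2
    have : (Finset.Icc 1 n).filter (fun j => p ^ j ∣ m) = Finset.Icc 1 (s.count p) := by
      ext j
      rw [Finset.mem_filter, Finset.mem_Icc, Finset.mem_Icc, key]
      omega
    rw [this]; simp
  rw [Finset.sum_congr rfl hcount]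
  have hdeg' : (n : ℚ) = ∑ p ∈ s.toFinset, ((s.count p • p.natDegree : ℕ) : ℚ) := by
    rw [← Nat.cast_sum, ← Finset.sum_multiset_map_count, ← hdeg]
  rw [hdeg']
  symm
  apply Finset.sum_subset_zero_on_sdiff
  · intro p hp
    rw [Multiset.mem_toFinset] at hp
    obtain ⟨h1, h2, h3⟩ := hprime p hp
    exact mem_Pr.2 ⟨h1, h2, (natDegree_le_of_dvd h3 hm.ne_zero).trans hn.le⟩
  · intro p hp
    rw [Finset.mem_sdiff, Multiset.mem_toFinset] at hp
    rw [Multiset.count_eq_zero_of_notMem hp.2]; simp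
  · intro p hp
    simp [nsmul_eq_mul]

lemma key_identity {ψ : F[X] → ℚ} (hψ : IsChr ψ) (n : ℕ) :
    n * Lc ψ n = ∑ k ∈ Finset.range (n + 1), Nc ψ k * Lc ψ (n - k) := by
  classical
  have h1 : ∀ k ∈ Finset.range (n + 1), Nc ψ k * Lc ψ (n - k) =
      ∑ p ∈ Pr F n, ∑ j ∈ Finset.Icc 1 n, 
        if j * p.natDegree = k then p.natDegree * ψ p ^ j * Lc ψ (n - k) else 0 := by
    intro k hk
    rw [Finset.mem_range] at hk
    rw [Nc_eq ψ (show k ≤ n by omega)]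
    simp only [Finset.sum_mul, ite_mul, zero_mul]
  rw [Finset.sum_congr rfl h1, Finset.sum_comm]
  have h2 : ∀ p ∈ Pr F n, (∑ k ∈ Finset.range (n + 1), ∑ j ∈ Finset.Icc 1 n, 
        if j * p.natDegree = k then p.natDegree * ψ p ^ j * Lc ψ (n - k) else 0) = 
      ∑ m ∈ Mon F n, ψ m * ∑ j ∈ Finset.Icc 1 n, if p ^ j ∣ m then (p.natDegree : ℚ) else 0 := by
    intro p hp
    rw [mem_Pr] at hp
    rw [Finset.sum_comm]
    simp only [Finset.mul_sum]
    rw [Finset.sum_comm (s := Mon F n)]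
    apply Finset.sum_congr rfl
    intro j hj
    rw [Finset.sum_ite_eq]
    have := sum_dvd hψ (hp.1.pow j) n
    rw [hp.1.natDegree_pow, hψ.pow hp.1] at this
    have e : (∑ m ∈ Mon F n, ψ m * if p ^ j ∣ m then (p.natDegree : ℚ) else 0) =
      p.natDegree * ∑ m ∈ Mon F n, if p ^ j ∣ m then ψ m else 0 := by
      rw [Finset.mul_sum]
      apply Finset.sum_congr rfl
      intro m _
      split_ifs <;> ring
    rw [e, this]
    simp only [Finset.mem_range, Nat.lt_succ_iff]
    split_ifs <;> ring
  rw [Finset.sum_congr rfl h2, Finset.sum_comm]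
  unfold Lc
  rw [Finset.mul_sum]
  apply Finset.sum_congr rfl
  intro m hm
  rw [mem_Mon] at hm
  rw [← Finset.mul_sum, deg_sum hm.1 hm.2, mul_comm]

end

section
open Polynomial
set_option linter.all false
variable {F : Type*} [Field F] [Fintype F]

lemma Lc_periodic {M : F[X]} (hM : M.Monic) {g : F[X] → ℚ}
    (hg : ∀ x y, M ∣ x - y → g x = g y) (e : ℕ) :
    Lc g (M.natDegree + e) = (Fintype.card F : ℚ) ^ e * ∑ r ∈ Low F M.natDegree, g r := by
  have h1 : ((Fintype.card F : ℚ) ^ e) = ((Mon F e).card : ℚ) := by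
    rw [card_Mon]; push_cast; rfl
  rw [h1, ← nsmul_eq_mul, ← Finset.sum_const, ← Finset.sum_product']
  unfold Lc
  symm
  have hMd : M.degree = M.natDegree := degree_eq_natDegree hM.ne_zero
  have hdeg : ∀ h r : F[X], h.Monic → r.degree < M.natDegree → r.degree < (M * h).degree := by
    intro h r hh hr
    rw [degree_mul]
    refine hr.trans_le ?_
    rw [hMd, degree_eq_natDegree hh.ne_zero]
    exact_mod_cast Nat.le_add_right _ _
  have hmod : ∀ h r : F[X], r.degree < M.natDegree → (M * h + r) %ₘ M = r := by
    intro h r hr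
    exact ((div_modByMonic_unique h r hM ⟨by ring, by rw [hMd]; exact hr⟩)).2
  have hdiv : ∀ h r : F[X], r.degree < M.natDegree → (M * h + r) /ₘ M = h := by
    intro h r hr
    exact ((div_modByMonic_unique h r hM ⟨by ring, by rw [hMd]; exact hr⟩)).1
  apply Finset.sum_bij (fun (x : F[X] × F[X]) _ => M * x.1 + x.2)
  · rintro ⟨h, r⟩ hx
    rw [Finset.mem_product, mem_Mon, mem_Low] at hx
    obtain ⟨⟨h1, h2⟩, h3⟩ := hx
    rw [mem_Mon]
    have := hdeg h r h1 h3
    constructor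
    · exact (hM.mul h1).add_of_left this
    · rw [natDegree_add_eq_left_of_degree_lt this, hM.natDegree_mul h1, h2]
  · rintro ⟨h, r⟩ hx ⟨h', r'⟩ hx' heq
    rw [Finset.mem_product, mem_Mon, mem_Low] at hx hx'
    simp only at heq
    have e1 := hmod h r hx.2
    have e2 := hdiv h r hx.2
    rw [heq, hmod h' r' hx'.2] at e1
    rw [heq, hdiv h' r' hx'.2] at e2
    rw [e1, e2]
  · intro m hm
    rw [mem_Mon] at hm
    have hlt : (m %ₘ M).degree < M.degree := degree_modByMonic_lt m hM
    rw [hMd] at hlt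
    have heq := modByMonic_add_div m M
    have hmd : M.degree ≤ m.degree := by
      rw [hMd, degree_eq_natDegree hm.1.ne_zero, hm.2]
      exact_mod_cast Nat.le_add_right _ _
    refine ⟨(m /ₘ M, m %ₘ M), ?_, by rw [add_comm]; exact heq⟩
    rw [Finset.mem_product, mem_Mon, mem_Low]
    refine ⟨⟨?_, ?_⟩, hlt⟩
    · have := leadingCoeff_divByMonic_of_monic hM hmd
      rw [Monic, this, hm.1.leadingCoeff]
    · simp only; rw [natDegree_divByMonic m hM, hm.2]; omega
  · rintro ⟨h, r⟩ hx
    apply hg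
    exact ⟨-h, by ring⟩

lemma Low_sum_zero {M : F[X]} (hM : M.Monic) {g : F[X] → ℚ}
    (hg : ∀ x y, M ∣ x - y → g x = g y) {c : F[X]} (hc : IsCoprime c M)
    (h : ∀ x, g (c * x) = - g x) : ∑ r ∈ Low F M.natDegree, g r = 0 := by
  classical
  have hMd : M.degree = M.natDegree := degree_eq_natDegree hM.ne_zero
  have hmaps : ∀ r ∈ Low F M.natDegree, (c * r) %ₘ M ∈ Low F M.natDegree := by
    intro r _
    rw [mem_Low, ← hMd]; exact degree_modByMonic_lt _ hM
  have hdv : ∀ x : F[X], M ∣ x - x %ₘ M := fun x =>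
    ⟨x /ₘ M, by nth_rewrite 1 [← modByMonic_add_div x M]; ring⟩
  have hinj : ∀ r ∈ Low F M.natDegree, ∀ r' ∈ Low F M.natDegree,
      (c * r) %ₘ M = (c * r') %ₘ M → r = r' := by
    intro r hr r' hr' heq
    rw [mem_Low, ← hMd] at hr hr'
    have h1 : M ∣ c * (r - r') := by
      have h2 := dvd_sub (hdv (c * r)) (hdv (c * r'))
      rw [heq] at h2
      have e : c * (r - r') = c * r - c * r' %ₘ M - (c * r' - c * r' %ₘ M) := by ring
      rw [e]; exact h2
    have h3 : M ∣ r - r' := hc.symm.dvd_of_dvd_mul_left h1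
    have h4 : (r - r').degree < M.degree := (degree_sub_le _ _).trans_lt (max_lt hr hr')
    exact sub_eq_zero.1 (eq_zero_of_dvd_of_degree_lt h3 h4)
  have himg : (Low F M.natDegree).image (fun r => (c * r) %ₘ M) = Low F M.natDegree := by
    apply Finset.eq_of_subset_of_card_le
    · intro x hx
      rw [Finset.mem_image] at hx
      obtain ⟨r, hr, rfl⟩ := hx
      exact hmaps r hr
    · rw [Finset.card_image_of_injOn (fun r hr r' hr' h => hinj r hr r' hr' h)]
  have : ∑ r ∈ Low F M.natDegree, g r = ∑ r ∈ Low F M.natDegree, - g r := by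
    conv_lhs => rw [← himg]
    rw [Finset.sum_image (fun r hr r' hr' h => hinj r hr r' hr' h)]
    apply Finset.sum_congr rfl
    intro r _
    rw [← h r]
    symm
    exact hg _ _ (hdv _)
  rw [Finset.sum_neg_distrib] at this
  linarith

noncomputable def Lser (ψ : F[X] → ℚ) : PowerSeries ℚ := PowerSeries.mk (Lc ψ)
noncomputable def Nser (ψ : F[X] → ℚ) : PowerSeries ℚ := PowerSeries.mk (Nc ψ)

/-- `A` is the logarithmic derivative of `f`, times `X` -/
def LogD (f A : PowerSeries ℚ) : Prop :=
  PowerSeries.X * PowerSeries.derivative ℚ f = A * f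

lemma coeff_XD (f : PowerSeries ℚ) (n : ℕ) :
    PowerSeries.coeff n (PowerSeries.X * PowerSeries.derivative ℚ f) =
      n * PowerSeries.coeff n f := by
  cases n with
  | zero => simp
  | succ n =>
    rw [PowerSeries.coeff_succ_X_mul, PowerSeries.coeff_derivative]
    push_cast; ring

lemma logD_Lser {ψ : F[X] → ℚ} (hψ : IsChr ψ) : LogD (Lser ψ) (Nser ψ) := by
  unfold LogD
  ext n
  rw [coeff_XD, PowerSeries.coeff_mul, Finset.Nat.sum_antidiagonal_eq_sum_range_succ_mk]
  simp only [Lser, Nser, PowerSeries.coeff_mk]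
  exact key_identity hψ n

lemma LogD.mul {f g A B : PowerSeries ℚ} (hf : LogD f A) (hg : LogD g B) :
    LogD (f * g) (A + B) := by
  unfold LogD at *
  rw [Derivation.leibniz, smul_eq_mul, smul_eq_mul]
  linear_combination g * hf + f * hg

lemma LogD.prod {ι : Type*} (s : Finset ι) {f A : ι → PowerSeries ℚ}
    (h : ∀ i ∈ s, LogD (f i) (A i)) : LogD (∏ i ∈ s, f i) (∑ i ∈ s, A i) := by
  classical
  induction s using Finset.induction_on with
  | empty => unfold LogD; simp
  | insert a s ha ih =>
    rw [Finset.prod_insert ha, Finset.sum_insert ha]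
    exact (h a (Finset.mem_insert_self _ _)).mul
      (ih fun i hi => h i (Finset.mem_insert_of_mem hi))

lemma LogD.recur {f A : PowerSeries ℚ} (h : LogD f A) (n : ℕ) :
    n * PowerSeries.coeff n f = ∑ x ∈ Finset.HasAntidiagonal.antidiagonal n,
      PowerSeries.coeff x.1 A * PowerSeries.coeff x.2 f := by
  rw [← coeff_XD, h, PowerSeries.coeff_mul]

lemma LogD.unique {f g A : PowerSeries ℚ} (hf : LogD f A) (hg : LogD g A)
    (hA : PowerSeries.coeff 0 A = 0)
    (h0 : PowerSeries.coeff 0 f = PowerSeries.coeff 0 g) : f = g := by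
  ext n
  induction n using Nat.strong_induction_on with
  | _ n ih =>
    rcases Nat.eq_zero_or_pos n with rfl | hn
    · exact h0
    have h1 := hf.recur n
    have h2 := hg.recur n
    have h3 : ∑ x ∈ Finset.HasAntidiagonal.antidiagonal n, PowerSeries.coeff x.1 A * PowerSeries.coeff x.2 f =
      ∑ x ∈ Finset.HasAntidiagonal.antidiagonal n, PowerSeries.coeff x.1 A * PowerSeries.coeff x.2 g := by
      apply Finset.sum_congr rfl
      rintro ⟨i, j⟩ hx
      rw [Finset.HasAntidiagonal.mem_antidiagonal] at hx
      simp only at hx ⊢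
      rcases Nat.eq_zero_or_pos i with rfl | hi
      · rw [hA, zero_mul, zero_mul]
      · rw [ih j (by omega)]
    rw [h3, ← h2] at h1
    exact mul_left_cancel₀ (by positivity) h1

/-- nonnegative logarithmic derivative -/
lemma LogD.nonneg {f A : PowerSeries ℚ} (hf : LogD f A)
    (hA : ∀ n, 0 ≤ PowerSeries.coeff n A) (hA0 : PowerSeries.coeff 0 A = 0)
    (h0 : PowerSeries.coeff 0 f = 1) (n : ℕ) : 0 ≤ PowerSeries.coeff n f := by
  induction n using Nat.strong_induction_on with
  | _ n ih =>
    rcases Nat.eq_zero_or_pos n with rfl | hn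
    · rw [h0]; norm_num
    have h1 := hf.recur n
    have h3 : 0 ≤ ∑ x ∈ Finset.HasAntidiagonal.antidiagonal n,
        PowerSeries.coeff x.1 A * PowerSeries.coeff x.2 f := by
      apply Finset.sum_nonneg
      rintro ⟨i, j⟩ hx
      rw [Finset.HasAntidiagonal.mem_antidiagonal] at hx
      simp only at hx ⊢
      rcases Nat.eq_zero_or_pos i with rfl | hi
      · rw [hA0, zero_mul]
      · exact mul_nonneg (hA i) (ih j (by omega))
    rw [← h1] at h3
    exact nonneg_of_mul_nonneg_right h3 (by positivity)

lemma LogD.pos {f A : PowerSeries ℚ} (hf : LogD f A)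
    (hA : ∀ n, 0 ≤ PowerSeries.coeff n A) (hA0 : PowerSeries.coeff 0 A = 0)
    (h0 : PowerSeries.coeff 0 f = 1) {d : ℕ} (hd : 0 < d) (hAd : 0 < PowerSeries.coeff d A)
    (j : ℕ) : 0 < PowerSeries.coeff (j * d) f := by
  induction j with
  | zero => rw [zero_mul, h0]; norm_num
  | succ j ih =>
    have h1 := hf.recur ((j + 1) * d)
    have h2 : PowerSeries.coeff d A * PowerSeries.coeff (j * d) f ≤
        ∑ x ∈ Finset.HasAntidiagonal.antidiagonal ((j + 1) * d),
        PowerSeries.coeff x.1 A * PowerSeries.coeff x.2 f :=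
      Finset.single_le_sum (f := fun x : ℕ × ℕ => PowerSeries.coeff x.1 A * PowerSeries.coeff x.2 f)
        (fun x _ => mul_nonneg (hA _) (hf.nonneg hA hA0 h0 _))
        (a := (d, j * d)) (Finset.HasAntidiagonal.mem_antidiagonal.2 (by ring))
    rw [← h1] at h2
    have h3 := (mul_pos hAd ih).trans_le h2
    exact pos_of_mul_pos_right h3 (by positivity)

lemma exists_poly_of_coeff {f : PowerSeries ℚ} {N : ℕ}
    (h : ∀ n, N ≤ n → PowerSeries.coeff n f = 0) : ∃ R : ℚ[X], (R : PowerSeries ℚ) = f := by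
  refine ⟨PowerSeries.trunc N f, ?_⟩
  ext n
  rw [Polynomial.coeff_coe, PowerSeries.coeff_trunc]
  split_ifs with hn
  · rfl
  · rw [h n (by omega)]

lemma coeff_one_sub_mul (t : ℚ) (f : PowerSeries ℚ) (n : ℕ) :
    PowerSeries.coeff (n + 1) (((1 - C t * X : ℚ[X]) : PowerSeries ℚ) * f) =
      PowerSeries.coeff (n + 1) f - t * PowerSeries.coeff n f := by
  push_cast
  rw [sub_mul, one_mul, map_sub, mul_assoc, PowerSeries.coeff_C_mul, PowerSeries.coeff_succ_X_mul]

lemma exists_poly_of_rec {c : ℕ → ℚ} {t : ℚ} {N : ℕ}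
    (h : ∀ n, N ≤ n → c (n + 1) = t * c n) :
    ∃ R : ℚ[X], (R : PowerSeries ℚ) = ((1 - C t * X : ℚ[X]) : PowerSeries ℚ) * PowerSeries.mk c := by
  apply exists_poly_of_coeff (N := N + 1)
  intro n hn
  obtain ⟨k, rfl⟩ := Nat.exists_eq_add_of_le' hn
  rw [← add_assoc, coeff_one_sub_mul, PowerSeries.coeff_mk, PowerSeries.coeff_mk, h _ (by omega),
    sub_self]

lemma dvd_of_eval {q : ℚ} (hq : q ≠ 0) {R : ℚ[X]} (h : R.eval q⁻¹ = 0) :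
    ∃ W, R = (1 - C q * X) * W := by
  have h1 : X - C q⁻¹ ∣ R := dvd_iff_isRoot.2 h
  obtain ⟨W, rfl⟩ := h1
  refine ⟨- C q⁻¹ * W, ?_⟩
  have : C q * C q⁻¹ = (1 : ℚ[X]) := by rw [← C_mul, mul_inv_cancel₀ hq, C_1]
  linear_combination - X * W * this

end

section
open Polynomial
set_option linter.all false
variable {F : Type*} [Field F] [Fintype F]

lemma nopoly {f A : PowerSeries ℚ} (hf : LogD f A)
    (hA : ∀ n, 0 ≤ PowerSeries.coeff n A) (hA0 : PowerSeries.coeff 0 A = 0)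
    (h0 : PowerSeries.coeff 0 f = 1) {d : ℕ} (hd : 0 < d) (hAd : 0 < PowerSeries.coeff d A)
    {q : ℚ} (hq : 0 < q) {R : ℚ[X]}
    (hR : (R : PowerSeries ℚ) = ((1 - C (-q) * X : ℚ[X]) : PowerSeries ℚ) * f) : False := by
  set n := (R.natDegree + 1) * d with hn
  have h1 : R.natDegree < n + 1 := by nlinarith
  have h2 := congrArg (PowerSeries.coeff (n + 1)) hR
  rw [coeff_one_sub_mul, Polynomial.coeff_coe, coeff_eq_zero_of_natDegree_lt h1] at h2
  have h3 := hf.pos hA hA0 h0 hd hAd (R.natDegree + 1)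
  rw [← hn] at h3
  have h4 := hf.nonneg hA hA0 h0 (n + 1)
  have h5 := mul_pos hq h3
  linarith

open Classical in
noncomputable def psi {ι : Type*} (χ : ι → F[X] → ℚ) (M : F[X]) (S : Finset ι) (m : F[X]) : ℚ :=
  if IsCoprime m M then ∏ i ∈ S, χ i m else 0

lemma coprime_congr {M x y : F[X]} (h : M ∣ x - y) : IsCoprime x M ↔ IsCoprime y M := by
  obtain ⟨k, hk⟩ := h
  have : x = y + M * k := by rw [← hk]; ring
  rw [this, IsCoprime.add_mul_left_left_iff]

lemma exists_prime_coprime {M : F[X]} (hM : M.Monic) :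
    ∃ p : F[X], p.Monic ∧ Irreducible p ∧ IsCoprime p M := by
  have hd : 0 < (X * M + 1).natDegree := by
    rw [← C_1, natDegree_add_C, natDegree_X_mul hM.ne_zero]; omega
  obtain ⟨p, h1, h2, h3⟩ := exists_monic_irreducible_factor (X * M + 1)
    (fun hu => by rw [natDegree_eq_zero_of_isUnit hu] at hd; omega)
  refine ⟨p, h1, h2, ?_⟩
  have : IsCoprime (X * M + 1) M := ⟨1, -X, by ring⟩
  exact this.of_isCoprime_of_dvd_left h3

section
variable {ι : Type*} [Fintype ι] {χ : ι → F[X] → ℚ} {M : F[X]}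

lemma psi_chr (h1 : ∀ i, χ i 1 = 1)
    (hmul : ∀ i x y, x.Monic → y.Monic → χ i (x * y) = χ i x * χ i y) (S : Finset ι) :
    IsChr (psi χ M S) := by
  constructor
  · unfold psi; rw [if_pos isCoprime_one_left]; exact Finset.prod_eq_one fun i _ => h1 i
  · intro x y hx hy
    unfold psi
    by_cases hx' : IsCoprime x M <;> by_cases hy' : IsCoprime y M <;>
      simp only [IsCoprime.mul_left_iff, hx', hy', and_true, true_and, and_false, false_and,
        if_true, if_false, mul_zero, zero_mul]
    rw [← Finset.prod_mul_distrib]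
    exact Finset.prod_congr rfl fun i _ => hmul i x y hx hy

lemma prod_pm {ι : Type*} (S : Finset ι) {f : ι → ℚ} (h : ∀ i, f i = 1 ∨ f i = -1) :
    (∏ i ∈ S, f i) = 1 ∨ (∏ i ∈ S, f i) = -1 := by
  classical
  induction S using Finset.induction_on with
  | empty => simp
  | insert a s ha ih =>
    rw [Finset.prod_insert ha]
    rcases ih with e | e <;> rcases h a with e' | e' <;> rw [e, e'] <;> norm_num

lemma psi_cases (hpm : ∀ i m, IsCoprime m M → χ i m = 1 ∨ χ i m = -1) (S : Finset ι) (m : F[X]) :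
    (psi χ M ∅ m = 0 ∧ psi χ M S m = 0) ∨ (psi χ M ∅ m = 1 ∧ psi χ M S m = 1) ∨
      (psi χ M ∅ m = 1 ∧ psi χ M S m = -1) := by
  unfold psi
  by_cases h : IsCoprime m M
  · simp only [h, if_true, Finset.prod_empty]
    rcases prod_pm S (fun i => hpm i m h) with e | e <;> rw [e] <;> norm_num
  · simp [h]

lemma pair_nonneg (hpm : ∀ i m, IsCoprime m M → χ i m = 1 ∨ χ i m = -1) (S : Finset ι)
    (m : F[X]) {j : ℕ} (hj : 1 ≤ j) : 0 ≤ psi χ M ∅ m ^ j + psi χ M S m ^ j := by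
  rcases psi_cases hpm S m with ⟨e, e'⟩ | ⟨e, e'⟩ | ⟨e, e'⟩ <;> rw [e, e']
  · simp [show j ≠ 0 by omega]
  · norm_num
  · rw [one_pow]
    rcases neg_one_pow_eq_or ℚ j with h | h <;> rw [h] <;> norm_num

lemma Nc_pair (S : Finset ι) (k : ℕ) :
    PowerSeries.coeff k (Nser (psi χ M ∅) + Nser (psi χ M S)) =
      ∑ p ∈ Pr F k, ∑ j ∈ Finset.Icc 1 k, if j * p.natDegree = k then
        p.natDegree * (psi χ M ∅ p ^ j + psi χ M S p ^ j) else 0 := by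
  simp only [Nser, map_add, PowerSeries.coeff_mk, Nc]
  rw [← Finset.sum_add_distrib]
  refine Finset.sum_congr rfl fun p _ => ?_
  rw [← Finset.sum_add_distrib]
  refine Finset.sum_congr rfl fun j _ => ?_
  split_ifs <;> ring

lemma pair_term_nonneg (hpm : ∀ i m, IsCoprime m M → χ i m = 1 ∨ χ i m = -1) (S : Finset ι)
    (k : ℕ) (p : F[X]) (j : ℕ) (hj : j ∈ Finset.Icc 1 k) :
    0 ≤ if j * p.natDegree = k then
        (p.natDegree : ℚ) * (psi χ M ∅ p ^ j + psi χ M S p ^ j) else 0 := by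
  split_ifs
  · exact mul_nonneg (by positivity) (pair_nonneg hpm S p (Finset.mem_Icc.1 hj).1)
  · exact le_rfl

lemma no_poly_pair (hM : M.Monic) (h1 : ∀ i, χ i 1 = 1)
    (hmul : ∀ i x y, x.Monic → y.Monic → χ i (x * y) = χ i x * χ i y)
    (hpm : ∀ i m, IsCoprime m M → χ i m = 1 ∨ χ i m = -1) (S : Finset ι)
    {q : ℚ} (hq : 0 < q) {R : ℚ[X]}
    (hR : (R : PowerSeries ℚ) = ((1 - C (-q) * X : ℚ[X]) : PowerSeries ℚ) *
      (Lser (psi χ M ∅) * Lser (psi χ M S))) : False := by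
  obtain ⟨p, hp1, hp2, hp3⟩ := exists_prime_coprime hM
  have hpd := hp2.natDegree_pos
  have hL0 : ∀ ψ : F[X] → ℚ, IsChr ψ → Lc ψ 0 = 1 := by
    intro ψ hψ
    have : Mon F 0 = {1} := by
      ext m
      rw [mem_Mon, Finset.mem_singleton]
      constructor
      · rintro ⟨h1, h2⟩; exact Polynomial.eq_one_of_monic_natDegree_zero h1 h2
      · rintro rfl; simp [monic_one]
    unfold Lc; rw [this, Finset.sum_singleton, hψ.one]
  have c0 := psi_chr (M := M) h1 hmul ∅
  have cS := psi_chr (M := M) h1 hmul S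
  refine nopoly ((logD_Lser c0).mul (logD_Lser cS)) (d := 2 * p.natDegree) ?_ ?_ ?_ (by omega) ?_ hq hR
  · intro n
    rw [Nc_pair]
    exact Finset.sum_nonneg fun p _ => Finset.sum_nonneg fun j hj => pair_term_nonneg hpm S n p j hj
  · rw [Nc_pair]
    simp
  · rw [PowerSeries.coeff_zero_eq_constantCoeff_apply, map_mul,
      ← PowerSeries.coeff_zero_eq_constantCoeff_apply, ← PowerSeries.coeff_zero_eq_constantCoeff_apply]
    simp only [Lser, PowerSeries.coeff_mk]
    rw [hL0 _ c0, hL0 _ cS, one_mul]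
  · rw [Nc_pair]
    have hmem : p ∈ Pr F (2 * p.natDegree) := mem_Pr.2 ⟨hp1, hp2, by omega⟩
    have hmem2 : 2 ∈ Finset.Icc 1 (2 * p.natDegree) := Finset.mem_Icc.2 ⟨by omega, by omega⟩
    refine lt_of_lt_of_le ?_ (Finset.single_le_sum
      (fun p' _ => Finset.sum_nonneg fun j hj => pair_term_nonneg hpm S _ p' j hj) hmem)
    refine lt_of_lt_of_le ?_ (Finset.single_le_sum
      (fun j hj => pair_term_nonneg hpm S _ p j hj) hmem2)
    rw [if_pos rfl]
    have hc : (0 : ℚ) < p.natDegree := by exact_mod_cast hpd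
    refine mul_pos hc ?_
    have : psi χ M ∅ p = 1 := by unfold psi; rw [if_pos hp3]; simp
    rw [this]; positivity

lemma psi_empty_poly (hM : M.Monic) : ∃ Z : ℚ[X], (Z : PowerSeries ℚ) =
    ((1 - C (Fintype.card F : ℚ) * X : ℚ[X]) : PowerSeries ℚ) * Lser (psi χ M ∅) := by
  apply exists_poly_of_rec (N := M.natDegree)
  intro n hn
  obtain ⟨e, rfl⟩ := Nat.exists_eq_add_of_le hn
  have hper : ∀ x y, M ∣ x - y → psi χ M ∅ x = psi χ M ∅ y := by
    intro x y h
    unfold psi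
    by_cases hx : IsCoprime x M
    · rw [if_pos hx, if_pos ((coprime_congr h).1 hx)]; simp
    · rw [if_neg hx, if_neg (fun hy => hx ((coprime_congr h).2 hy))]
  rw [add_assoc, Lc_periodic hM hper, Lc_periodic hM hper, pow_succ]; ring

lemma orth [DecidableEq ι] (hpm : ∀ i m, IsCoprime m M → χ i m = 1 ∨ χ i m = -1) {η : ι → ℚ}
    (hη : ∀ i, η i = 1 ∨ η i = -1) (hη1 : ∃ i, η i ≠ 1)
    (hno : ∀ p : F[X], p.Monic → Irreducible p → IsCoprime p M → ∃ i, χ i p ≠ η i) (k : ℕ) :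
    ∑ S : Finset ι, (∏ i ∈ S, η i) * Nc (psi χ M S) k = 0 := by
  unfold Nc
  simp only [Finset.mul_sum]
  rw [Finset.sum_comm]
  refine Finset.sum_eq_zero fun p hp => ?_
  rw [Finset.sum_comm]
  refine Finset.sum_eq_zero fun j hj => ?_
  rw [mem_Pr] at hp
  rw [Finset.mem_Icc] at hj
  split_ifs with hjk
  swap
  · simp
  by_cases hc : IsCoprime p M
  · have e : ∀ S : Finset ι, (∏ i ∈ S, η i) * ((p.natDegree : ℚ) * psi χ M S p ^ j) =
        p.natDegree * ∏ i ∈ S, (η i * χ i p ^ j) := by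
      intro S
      unfold psi
      rw [if_pos hc, Finset.prod_mul_distrib, Finset.prod_pow]; ring
    simp only [e]
    rw [← Finset.mul_sum]
    have h2 : ∑ S : Finset ι, ∏ i ∈ S, (η i * χ i p ^ j) = ∏ i, (1 + η i * χ i p ^ j) := by
      rw [Finset.prod_one_add, Finset.powerset_univ]
    rw [h2]
    have h3 : ∃ i, 1 + η i * χ i p ^ j = 0 := by
      rcases Nat.even_or_odd j with h | h
      · obtain ⟨i, hi⟩ := hη1
        refine ⟨i, ?_⟩
        have e1 : χ i p ^ j = 1 := by
          rcases hpm i p hc with e | e <;> rw [e] <;> simp [h]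
        rw [e1, (hη i).resolve_left hi]; norm_num
      · obtain ⟨i, hi⟩ := hno p hp.1 hp.2.1 hc
        refine ⟨i, ?_⟩
        have e1 : χ i p ^ j = χ i p := by
          rcases hpm i p hc with e | e <;> rw [e] <;> simp [h]
        rw [e1]
        rcases hpm i p hc with e | e <;> rcases hη i with e' | e' <;> rw [e, e'] at hi ⊢ <;>
          first | (norm_num; done) | exact absurd rfl hi
    obtain ⟨i, hi⟩ := h3
    rw [Finset.prod_eq_zero (Finset.mem_univ i) hi, mul_zero]
  · refine Finset.sum_eq_zero fun S _ => ?_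
    have : psi χ M S p = 0 := by unfold psi; rw [if_neg hc]
    rw [this, zero_pow (by omega)]; ring

lemma dirich_abs (hM : M.Monic) (h1 : ∀ i, χ i 1 = 1)
    (hmul : ∀ i x y, x.Monic → y.Monic → χ i (x * y) = χ i x * χ i y)
    (hpm : ∀ i m, IsCoprime m M → χ i m = 1 ∨ χ i m = -1)
    (hpoly : ∀ S : Finset ι, S.Nonempty → ∃ R : ℚ[X], (R : PowerSeries ℚ) =
      ((1 - C (-(Fintype.card F : ℚ)) * X : ℚ[X]) : PowerSeries ℚ) * Lser (psi χ M S))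
    {η : ι → ℚ} (hη : ∀ i, η i = 1 ∨ η i = -1) (hη1 : ∃ i, η i ≠ 1) :
    ∃ p : F[X], p.Monic ∧ Irreducible p ∧ IsCoprime p M ∧ ∀ i, χ i p = η i := by
  classical
  by_contra hcon
  push Not at hcon
  have horth := orth hpm hη hη1 hcon
  set q : ℚ := (Fintype.card F : ℚ) with hq
  have hq0 : 0 < q := by rw [hq]; exact_mod_cast Fintype.card_pos
  set u : ℚ[X] := 1 - C (-q) * X with hu
  have huq : u.eval q⁻¹ = 2 := by
    rw [hu]; simp [hq0.ne']; norm_num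
  obtain ⟨Z, hZ⟩ := psi_empty_poly (χ := χ) hM
  rw [← hq] at hZ
  choose! R hR using hpoly
  have hv0 : ((1 - C q * X : ℚ[X]) : PowerSeries ℚ) ≠ 0 := by
    rw [Ne, Polynomial.coe_eq_zero_iff]
    intro h
    have := congrArg (eval 0) h
    simp at this
  have hZ0 : Z.eval q⁻¹ ≠ 0 := by
    intro h
    obtain ⟨W, rfl⟩ := dvd_of_eval hq0.ne' h
    rw [Polynomial.coe_mul] at hZ
    have hW := mul_left_cancel₀ hv0 hZ
    refine no_poly_pair (χ := χ) hM h1 hmul hpm ∅ hq0 (R := u * (W * W)) ?_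
    rw [Polynomial.coe_mul, Polynomial.coe_mul, hW]
  have hR0 : ∀ S : Finset ι, S.Nonempty → (R S).eval q⁻¹ ≠ 0 := by
    intro S hS h
    obtain ⟨W, hW⟩ := dvd_of_eval hq0.ne' h
    have h2 := hR S hS
    rw [hW, Polynomial.coe_mul] at h2
    refine no_poly_pair (χ := χ) hM h1 hmul hpm S hq0 (R := Z * W) ?_
    apply mul_left_cancel₀ hv0
    rw [Polynomial.coe_mul]
    linear_combination Z * h2 + u * Lser (psi χ M S) * hZ
  set PP := (Finset.univ : Finset (Finset ι)).filter (fun S => ∏ i ∈ S, η i = 1) with hPP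
  set QQ := (Finset.univ : Finset (Finset ι)).filter (fun S => ¬ ∏ i ∈ S, η i = 1) with hQQ
  have hA : ∑ S ∈ PP, Nser (psi χ M S) = ∑ S ∈ QQ, Nser (psi χ M S) := by
    ext k
    simp only [map_sum, Nser, PowerSeries.coeff_mk]
    have := horth k
    rw [← Finset.sum_filter_add_sum_filter_not _ (fun S => ∏ i ∈ S, η i = 1)] at this
    have e1 : ∑ S ∈ PP, (∏ i ∈ S, η i) * Nc (psi χ M S) k = ∑ S ∈ PP, Nc (psi χ M S) k := by
      refine Finset.sum_congr rfl fun S hS => ?_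
      rw [(Finset.mem_filter.1 hS).2, one_mul]
    have e2 : ∑ S ∈ QQ, (∏ i ∈ S, η i) * Nc (psi χ M S) k = - ∑ S ∈ QQ, Nc (psi χ M S) k := by
      rw [← Finset.sum_neg_distrib]
      refine Finset.sum_congr rfl fun S hS => ?_
      rw [(prod_pm S hη).resolve_left (Finset.mem_filter.1 hS).2]; ring
    rw [e1, e2] at this
    linarith
  have hL0 : ∀ S, PowerSeries.constantCoeff (Lser (psi χ M S)) = 1 := by
    intro S
    have : Mon F 0 = {1} := by
      ext m
      rw [mem_Mon, Finset.mem_singleton]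
      constructor
      · rintro ⟨h1, h2⟩; exact Polynomial.eq_one_of_monic_natDegree_zero h1 h2
      · rintro rfl; simp [monic_one]
    rw [← PowerSeries.coeff_zero_eq_constantCoeff_apply]
    unfold Lser
    rw [PowerSeries.coeff_mk]
    unfold Lc
    rw [this, Finset.sum_singleton, (psi_chr h1 hmul S).one]
  have hLD : ∀ s : Finset (Finset ι), LogD (∏ S ∈ s, Lser (psi χ M S)) (∑ S ∈ s, Nser (psi χ M S)) :=
    fun s => LogD.prod s fun S _ => logD_Lser (psi_chr h1 hmul S)
  have hprod : ∏ S ∈ PP, Lser (psi χ M S) = ∏ S ∈ QQ, Lser (psi χ M S) := by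
    refine LogD.unique (hLD PP) (by rw [hA]; exact hLD QQ) ?_ ?_
    · simp [Nser, Nc]
    · rw [PowerSeries.coeff_zero_eq_constantCoeff_apply, PowerSeries.coeff_zero_eq_constantCoeff_apply,
        map_prod, map_prod, Finset.prod_congr rfl fun S _ => hL0 S,
        Finset.prod_congr rfl fun S _ => hL0 S]
      simp
  have hQne : ∀ S ∈ QQ, S.Nonempty := by
    intro S hS
    rw [Finset.nonempty_iff_ne_empty]
    rintro rfl
    exact (Finset.mem_filter.1 hS).2 (by simp)
  have hemp : ∅ ∈ PP := Finset.mem_filter.2 ⟨Finset.mem_univ _, by simp⟩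
  have hPne : ∀ S ∈ PP.erase ∅, S.Nonempty := by
    intro S hS
    exact Finset.nonempty_iff_ne_empty.2 (Finset.mem_erase.1 hS).1
  have hgen : ∀ s : Finset (Finset ι), (∀ S ∈ s, S.Nonempty) →
      ((∏ S ∈ s, R S : ℚ[X]) : PowerSeries ℚ) = (u : PowerSeries ℚ) ^ s.card * ∏ S ∈ s, Lser (psi χ M S) := by
    intro s hs
    have : ((∏ S ∈ s, R S : ℚ[X]) : PowerSeries ℚ) = ∏ S ∈ s, (R S : PowerSeries ℚ) :=
      map_prod (Polynomial.coeToPowerSeries.ringHom (R := ℚ)) _ _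
    rw [this, Finset.prod_congr rfl fun S hS => hR S (hs S hS), Finset.prod_mul_distrib,
      Finset.prod_const]
  have hfin : Z * (∏ S ∈ PP.erase ∅, R S) * u ^ QQ.card =
      (1 - C q * X) * u ^ (PP.erase ∅).card * ∏ S ∈ QQ, R S := by
    rw [← Polynomial.coe_inj]
    rw [Polynomial.coe_mul, Polynomial.coe_mul, Polynomial.coe_mul, Polynomial.coe_mul, hgen _ hPne, hgen _ hQne,
      Polynomial.coe_pow, Polynomial.coe_pow, hZ, ← hprod, ← Finset.mul_prod_erase PP _ hemp]
    ring
  have hev := congrArg (eval q⁻¹) hfin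
  simp only [eval_mul, eval_pow, huq, eval_prod] at hev
  have hz : eval q⁻¹ (1 - C q * X) = 0 := by simp [hq0.ne']
  rw [hz, zero_mul, zero_mul] at hev
  have hne : eval q⁻¹ Z * (∏ S ∈ PP.erase ∅, eval q⁻¹ (R S)) * 2 ^ QQ.card ≠ 0 := by
    refine mul_ne_zero (mul_ne_zero hZ0 ?_) (by positivity)
    exact Finset.prod_ne_zero_iff.2 fun S hS => hR0 S (hPne S hS)
  exact hne hev
end

end

section
open Polynomial
set_option linter.all false
variable {F : Type*} [Field F] [Fintype F]

lemma coprime_of_ne {f g : F[X]} (hf : f.Monic) (hfi : Irreducible f) (hg : g.Monic)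
    (hgi : Irreducible g) (h : f ≠ g) : IsCoprime f g := by
  rw [hfi.coprime_iff_not_dvd]
  intro hd
  exact h (eq_of_monic_of_associated hf hg (hfi.associated_of_dvd hgi hd))

lemma crt (T : Finset F[X]) (hT : ∀ f ∈ T, f.Monic ∧ Irreducible f) (t : F[X] → F[X]) :
    ∃ b : F[X], ∀ f ∈ T, f ∣ b - t f := by
  obtain ⟨b, hb⟩ := Ideal.exists_forall_sub_mem_ideal (ι := {f // f ∈ T})
    (I := fun f => Ideal.span {f.1})
    (fun f g h => (Ideal.isCoprime_span_singleton_iff _ _).2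
      (coprime_of_ne (hT f.1 f.2).1 (hT f.1 f.2).2 (hT g.1 g.2).1 (hT g.1 g.2).2
        (fun e => h (Subtype.ext e)))) (fun f => t f.1)
  exact ⟨b, fun f hf => Ideal.mem_span_singleton.1 (hb ⟨f, hf⟩)⟩

lemma dirichlet_aux (hodd : ringChar F ≠ 2) (T : Finset F[X])
    (hT : ∀ f ∈ T, f.Monic ∧ Irreducible f) (η : F[X] → ℤ)
    (hη : ∀ f ∈ T, η f = 1 ∨ η f = -1) (hne : ∃ f ∈ T, η f = -1) (ε : ℕ) :
    ∃ p : F[X], p.Monic ∧ Irreducible p ∧ (∀ f ∈ T, leg f p = η f) ∧ p.natDegree % 2 = ε % 2 := by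
  classical
  set M : F[X] := ∏ f ∈ T, f with hMdef
  have hM : M.Monic := monic_prod_of_monic _ _ fun f hf => (hT f hf).1
  have hdM : ∀ f ∈ T, f ∣ M := fun f hf => Finset.dvd_prod_of_mem _ hf
  let χ' : Option {f // f ∈ T} → F[X] → ℚ := fun i x => 
    match i with
    | none => 1
    | some f => (leg f.1 x : ℚ)
  let t : Option {f // f ∈ T} → ℚ := fun i => 
    match i with
    | none => -1
    | some f => 1
  let χ : Option {f // f ∈ T} → F[X] → ℚ := fun i x => t i ^ x.natDegree * χ' i x
  have hχn : ∀ x : F[X], χ none x = (-1) ^ x.natDegree := fun x => by simp [χ, t, χ']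
  have hχs : ∀ f x, χ (some f) x = (leg f.1 x : ℚ) := fun f x => by simp [χ, t, χ']
  have h1 : ∀ i, χ i 1 = 1 := by
    rintro (_ | f)
    · rw [hχn]; simp
    · rw [hχs, leg_one (hT f.1 f.2).1]; simp
  have hmul : ∀ i x y, x.Monic → y.Monic → χ i (x * y) = χ i x * χ i y := by
    rintro (_ | f) x y hx hy
    · rw [hχn, hχn, hχn, hx.natDegree_mul hy, pow_add]
    · rw [hχs, hχs, hχs, leg_mul (hT f.1 f.2).1]; push_cast; rfl
  have hcop : ∀ f ∈ T, ∀ m, IsCoprime m M → IsCoprime f m := fun f hf m hm =>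
    (hm.of_isCoprime_of_dvd_right (hdM f hf)).symm
  have hpm : ∀ i m, IsCoprime m M → χ i m = 1 ∨ χ i m = -1 := by
    rintro (_ | f) m hm
    · rw [hχn]; exact neg_one_pow_eq_or ℚ _
    · rw [hχs]
      rcases leg_pm (hT f.1 f.2).1 (hcop f.1 f.2 m hm) with e | e <;> rw [e] <;> norm_num
  have hper : ∀ S, ∀ x y, M ∣ x - y → psi χ' M S x = psi χ' M S y := by
    intro S x y h
    unfold psi
    by_cases hx : IsCoprime x M
    · rw [if_pos hx, if_pos ((coprime_congr h).1 hx)]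
      refine Finset.prod_congr rfl ?_
      rintro (_ | f) _
      · rfl
      · simp only [χ']
        rw [leg_congr (hT f.1 f.2).1 ((hdM f.1 f.2).trans h)]
    · rw [if_neg hx, if_neg (fun hy => hx ((coprime_congr h).2 hy))]
  have hLc : ∀ S n, Lc (psi χ M S) n = (∏ i ∈ S, t i) ^ n * Lc (psi χ' M S) n := by
    intro S n
    unfold Lc
    rw [Finset.mul_sum]
    refine Finset.sum_congr rfl fun m hm => ?_
    rw [mem_Mon] at hm
    unfold psi
    split_ifs
    · rw [← hm.2, ← Finset.prod_pow, ← Finset.prod_mul_distrib]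
    · rw [mul_zero]
  have hpoly : ∀ S : Finset (Option {f // f ∈ T}), S.Nonempty → ∃ R : ℚ[X], (R : PowerSeries ℚ) =
      ((1 - C (-(Fintype.card F : ℚ)) * X : ℚ[X]) : PowerSeries ℚ) * Lser (psi χ M S) := by
    intro S hS
    apply exists_poly_of_rec (N := M.natDegree)
    intro n hn
    obtain ⟨e, rfl⟩ := Nat.exists_eq_add_of_le hn
    rw [add_assoc, hLc, hLc, Lc_periodic hM (hper S), Lc_periodic hM (hper S)]
    by_cases hs : ∃ f, some f ∈ S
    · obtain ⟨f0, hf0⟩ := hs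
      obtain ⟨c0, hc0⟩ := exists_leg_neg hodd (hT f0.1 f0.2).1 (hT f0.1 f0.2).2
      obtain ⟨c, hc⟩ := crt T hT (fun f => if f = f0.1 then c0 else 1)
      have hl0 : leg f0.1 c = -1 := by
        have := hc f0.1 f0.2
        rw [if_pos rfl] at this
        rw [leg_congr (hT f0.1 f0.2).1 this, hc0]
      have hl1 : ∀ f : {f // f ∈ T}, f ≠ f0 → leg f.1 c = 1 := by
        intro f hf
        have := hc f.1 f.2
        rw [if_neg (fun h => hf (Subtype.ext h))] at this
        rw [leg_congr (hT f.1 f.2).1 this, leg_one (hT f.1 f.2).1]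
      have hcM : IsCoprime c M := by
        apply IsCoprime.prod_right
        intro f hf
        by_contra hnc
        have h0 := (leg_eq_zero (hT f hf).1).2 (fun h => hnc h.symm)
        by_cases hff : (⟨f, hf⟩ : {f // f ∈ T}) = f0
        · rw [← hff] at hl0; simp only at hl0; omega
        · have := hl1 _ hff; simp only at this; omega
      have hz := Low_sum_zero hM (hper S) hcM (by
        intro x
        unfold psi
        by_cases hx : IsCoprime x M
        · rw [if_pos hx, if_pos (hcM.mul_left hx), ← Finset.mul_prod_erase S _ hf0,
            ← Finset.mul_prod_erase S (fun i => χ' i x) hf0]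
          have e1 : χ' (some f0) (c * x) = - χ' (some f0) x := by
            simp only [χ']; rw [leg_mul (hT f0.1 f0.2).1, hl0]; push_cast; ring
          have e2 : ∀ i ∈ S.erase (some f0), χ' i (c * x) = χ' i x := by
            rintro (_ | f) hi
            · rfl
            · simp only [χ']
              rw [leg_mul (hT f.1 f.2).1, hl1 f, one_mul]
              rintro rfl
              exact (Finset.mem_erase.1 hi).1 rfl
          rw [e1, Finset.prod_congr rfl e2]; ring
        · rw [if_neg hx, if_neg (fun h => hx h.of_mul_left_right)]; ring)
      rw [hz]; ring
    · have : S = {none} := by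
        obtain ⟨i, hi⟩ := hS
        ext j
        rw [Finset.mem_singleton]
        constructor
        · intro hj
          cases j with
          | none => rfl
          | some f => exact absurd ⟨f, hj⟩ hs
        · rintro rfl
          cases i with
          | none => exact hi
          | some f => exact absurd ⟨f, hi⟩ hs
      rw [this, Finset.prod_singleton]
      simp only [t]
      ring
  obtain ⟨f1, hf1, hη1⟩ := hne
  obtain ⟨p, hp1, hp2, hp3, hp4⟩ := dirich_abs hM h1 hmul hpm hpoly
    (η := fun i => match i with
      | none => (-1) ^ ε
      | some f => (η f.1 : ℚ))
    (by
      rintro (_ | f)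
      · exact neg_one_pow_eq_or ℚ _
      · rcases hη f.1 f.2 with e | e <;> simp only [e] <;> norm_num)
    ⟨some ⟨f1, hf1⟩, by simp only [hη1]; norm_num⟩
  refine ⟨p, hp1, hp2, ?_, ?_⟩
  · intro f hf
    have := hp4 (some ⟨f, hf⟩)
    rw [hχs] at this
    simp only at this
    exact_mod_cast this
  · have := hp4 none
    rw [hχn] at this
    simp only at this
    have ha := neg_one_pow_eq_ite (R := ℚ) (n := ε)
    rcases Nat.even_or_odd p.natDegree with h | h <;> rcases Nat.even_or_odd ε with h' | h' <;>
      simp only [h.neg_one_pow, h'.neg_one_pow] at this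
    · rw [Nat.even_iff.1 h, Nat.even_iff.1 h']
    · norm_num at this
    · norm_num at this
    · rw [Nat.odd_iff.1 h, Nat.odd_iff.1 h']

lemma dirichlet (hodd : ringChar F ≠ 2) (T : Finset F[X])
    (hT : ∀ f ∈ T, f.Monic ∧ Irreducible f) (η : F[X] → ℤ)
    (hη : ∀ f ∈ T, η f = 1 ∨ η f = -1) (ε : ℕ) :
    ∃ p : F[X], p.Monic ∧ Irreducible p ∧ (∀ f ∈ T, leg f p = η f) ∧ p.natDegree % 2 = ε % 2 := by
  classical
  have hM : (∏ f ∈ T, f).Monic := monic_prod_of_monic _ _ fun f hf => (hT f hf).1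
  obtain ⟨g, hg1, hg2, hg3⟩ := exists_prime_coprime hM
  have hgT : g ∉ T := fun h => hg2.not_isUnit (hg3.isUnit_of_dvd' dvd_rfl (Finset.dvd_prod_of_mem _ h))
  have hne : ∀ f ∈ T, f ≠ g := fun f hf h => hgT (h ▸ hf)
  obtain ⟨p, h1, h2, h3, h4⟩ := dirichlet_aux hodd (insert g T)
    (by
      intro f hf
      rcases Finset.mem_insert.1 hf with rfl | hf
      · exact ⟨hg1, hg2⟩
      · exact hT f hf) (fun f => if f = g then -1 else η f)
    (by
      intro f hf
      rcases Finset.mem_insert.1 hf with rfl | hf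
      · simp
      · rw [if_neg (hne f hf)]; exact hη f hf) ⟨g, Finset.mem_insert_self _ _, by simp⟩ ε
  refine ⟨p, h1, h2, fun f hf => ?_, h4⟩
  have := h3 f (Finset.mem_insert_of_mem hf)
  rwa [if_neg (hne f hf)] at this

end

section
open Polynomial
set_option linter.all false
variable {F : Type*} [Field F] [Fintype F]

lemma coprime_of_no_prime {x y : F[X]} (hx : x ≠ 0)
    (h : ∀ f : F[X], f.Monic → Irreducible f → f ∣ x → f ∣ y → False) : IsCoprime x y := by
  apply isCoprime_of_irreducible_dvd (fun h0 => hx h0.1)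
  intro z hz hzx hzy
  obtain ⟨f, h1, h2, h3, h4⟩ := exists_monic_assoc hz
  exact h f h1 h2 (h3.trans hzx) (h3.trans hzy)

lemma not_both {f x y : F[X]} (hi : Irreducible f) (h : IsCoprime x y) (hx : f ∣ x) (hy : f ∣ y) :
    False := hi.not_isUnit (h.isUnit_of_dvd' hx hy)

lemma exists_split {A B : F[X]} (sA : Squarefree A) (sB : Squarefree B) :
    ∃ G A1 B1 : F[X], G.Monic ∧ A = G * A1 ∧ B = G * B1 ∧ IsCoprime A1 B1 ∧ IsCoprime G A1 ∧
      IsCoprime G B1 ∧ ∀ r : F[X], r ∣ A → r ∣ B → r ∣ G := by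
  classical
  have h0 : EuclideanDomain.gcd A B ≠ 0 := fun h =>
    sA.ne_zero (EuclideanDomain.gcd_eq_zero_iff.1 h).1
  obtain ⟨G, hG, e, hd, -⟩ := monic_part h0
  have hGA : G ∣ A := hd.trans (EuclideanDomain.gcd_dvd_left A B)
  have hGB : G ∣ B := hd.trans (EuclideanDomain.gcd_dvd_right A B)
  have hmax : ∀ r : F[X], r ∣ A → r ∣ B → r ∣ G := by
    intro r h1 h2
    have := EuclideanDomain.dvd_gcd h1 h2
    rw [e] at this
    exact (isUnit_C.2 (isUnit_iff_ne_zero.2 (leadingCoeff_ne_zero.2 h0))).dvd_mul_left.1 this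
  obtain ⟨A1, hA1⟩ := hGA
  obtain ⟨B1, hB1⟩ := hGB
  have hA10 : A1 ≠ 0 := by rintro rfl; exact sA.ne_zero (by rw [hA1, mul_zero])
  refine ⟨G, A1, B1, hG, hA1, hB1, ?_, ?_, ?_, hmax⟩
  · apply coprime_of_no_prime hA10
    intro f h1 h2 h3 h4
    have h5 := hmax (G * f) (by rw [hA1]; exact mul_dvd_mul_left _ h3)
      (by rw [hB1]; exact mul_dvd_mul_left _ h4)
    have h6 := natDegree_le_of_dvd h5 hG.ne_zero
    rw [hG.natDegree_mul h1] at h6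
    have := h2.natDegree_pos
    omega
  · rw [hA1] at sA; exact (squarefree_mul_iff.1 sA).1.isCoprime
  · rw [hB1] at sB; exact (squarefree_mul_iff.1 sB).1.isCoprime

open Classical in
/-- monic irreducible divisors -/
noncomputable def pdiv (D : F[X]) : Finset F[X] := (Pr F D.natDegree).filter (· ∣ D)

lemma mem_pdiv {D f : F[X]} (hD : D ≠ 0) : f ∈ pdiv D ↔ f.Monic ∧ Irreducible f ∧ f ∣ D := by
  classical
  unfold pdiv
  rw [Finset.mem_filter, mem_Pr]
  constructor
  · rintro ⟨⟨h1, h2, _⟩, h3⟩; exact ⟨h1, h2, h3⟩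
  · rintro ⟨h1, h2, h3⟩; exact ⟨⟨h1, h2, natDegree_le_of_dvd h3 hD⟩, h3⟩

lemma leg_w {f w l : F[X]} (hf : f.Monic) (hw : IsCoprime f w) (h : leg f l = leg f w) :
    leg f (w * l) = 1 := by
  rw [leg_mul hf, h, leg_mul_self hf hw]

lemma chiF_self {c : F} (h : c ≠ 0) : chiF (c * c) = 1 := by rw [chiF_mul, chiF_mul_self h]

lemma cop_C {f : F[X]} {k : F} (h : k ≠ 0) : IsCoprime f (C k) :=
  by
  refine ⟨0, C k⁻¹, ?_⟩
  rw [zero_mul, zero_add, ← C_mul, inv_mul_cancel₀ h, C_1]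

/-- the quaternary statement -/
lemma quat (hodd : ringChar F ≠ 2) {A B D E : F[X]}
    (sA : Squarefree A) (sB : Squarefree B) (sD : Squarefree D) (sE : Squarefree E)
    (hEA : IsCoprime E A) (hEB : IsCoprime E B) (hED : IsCoprime E D)
    (hABD : ∀ f : F[X], f.Monic → Irreducible f → f ∣ A → f ∣ B → f ∣ D → False)
    (hAB : ∀ f : F[X], f.Monic → Irreducible f → f ∣ A → f ∣ B → leg f (-(D * E)) = 1)
    (hAD : ∀ f : F[X], f.Monic → Irreducible f → f ∣ A → f ∣ D → leg f (-(B * E)) = 1)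
    (hBD : ∀ f : F[X], f.Monic → Irreducible f → f ∣ B → f ∣ D → leg f (-(A * E)) = 1)
    (hinf : (A.natDegree % 2 = D.natDegree % 2 ∧ A.natDegree % 2 = E.natDegree % 2) ∨
      (A.natDegree % 2 = B.natDegree % 2 ∧ A.natDegree % 2 = D.natDegree % 2)) :
    ∃ u v w s : F[X], (u ≠ 0 ∨ v ≠ 0 ∨ w ≠ 0 ∨ s ≠ 0) ∧
      A * u ^ 2 + B * v ^ 2 + D * w ^ 2 + E * s ^ 2 = 0 := by
  classical
  obtain ⟨G, A1, B1, hG, eA, eB, cAB, cGA, cGB, hmax⟩ := exists_split sA sB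
  have dA1 : A1 ∣ A := ⟨G, by rw [eA, mul_comm]⟩
  have dB1 : B1 ∣ B := ⟨G, by rw [eB, mul_comm]⟩
  have dGA : G ∣ A := ⟨A1, eA⟩
  have dGB : G ∣ B := ⟨B1, eB⟩
  have sA1 := sA.squarefree_of_dvd dA1
  have sB1 := sB.squarefree_of_dvd dB1
  have sG := sA.squarefree_of_dvd dGA
  have lA : A.leadingCoeff = A1.leadingCoeff := by rw [eA, leadingCoeff_mul, hG.leadingCoeff, one_mul]
  have nA : A.natDegree = G.natDegree + A1.natDegree := by
    rw [eA, natDegree_mul hG.ne_zero sA1.ne_zero]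
  have nB : B.natDegree = G.natDegree + B1.natDegree := by
    rw [eB, natDegree_mul hG.ne_zero sB1.ne_zero]
  have cDG : IsCoprime D G := coprime_of_no_prime sD.ne_zero fun f h1 h2 h3 h4 =>
    hABD f h1 h2 (h4.trans dGA) (h4.trans dGB) h3
  have cEG : IsCoprime E G := hEA.of_isCoprime_of_dvd_right dGA
  have cEA1 : IsCoprime E A1 := hEA.of_isCoprime_of_dvd_right dA1
  have cEB1 : IsCoprime E B1 := hEB.of_isCoprime_of_dvd_right dB1
  -- choice of the constant
  obtain ⟨k, hk0, hk⟩ : ∃ k : F, k ≠ 0 ∧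
      ((A.natDegree % 2 = D.natDegree % 2 ∧ A.natDegree % 2 = E.natDegree % 2 ∧
          k = - A1.leadingCoeff) ∨
        (A.natDegree % 2 = B.natDegree % 2 ∧ A.natDegree % 2 = D.natDegree % 2 ∧
          k = D.leadingCoeff)) := by
    rcases hinf with ⟨h1, h2⟩ | ⟨h1, h2⟩
    · exact ⟨_, neg_ne_zero.2 (leadingCoeff_ne_zero.2 sA1.ne_zero), Or.inl ⟨h1, h2, rfl⟩⟩
    · exact ⟨_, (leadingCoeff_ne_zero.2 sD.ne_zero), Or.inr ⟨h1, h2, rfl⟩⟩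
  let w : F[X] → F[X] := fun f =>
    if f ∣ A1 then -(B1 * C k) else if f ∣ B1 then -(A1 * C k) else
    if f ∣ D then E * C k * G else if f ∣ E then D * C k * G else 1
  have hnd : ∀ {f x : F[X]}, Irreducible f → ¬ f ∣ x → IsCoprime f x :=
    fun hi h => hi.coprime_iff_not_dvd.2 h
  have hw : ∀ f : F[X], f.Monic → Irreducible f → IsCoprime f (w f) := by
    intro f hf hi
    simp only [w]
    split_ifs with h1 h2 h3 h4
    · exact ((hnd hi fun h => not_both hi cAB h1 h).mul_right (cop_C hk0)).neg_right
    · exact ((hnd hi fun h => not_both hi cAB h h2).mul_right (cop_C hk0)).neg_right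
    · exact ((hnd hi fun h => not_both hi hED h h3).mul_right (cop_C hk0)).mul_right
        (hnd hi fun h => not_both hi cDG h3 h)
    · exact ((hnd hi h3).mul_right (cop_C hk0)).mul_right (hnd hi fun h => not_both hi cEG h4 h)
    · exact isCoprime_one_right
  have hP0 : A * B * D * E ≠ 0 :=
    mul_ne_zero (mul_ne_zero (mul_ne_zero sA.ne_zero sB.ne_zero) sD.ne_zero) sE.ne_zero
  obtain ⟨l, hl, hli, hleg, hldeg⟩ := dirichlet hodd (pdiv (A * B * D * E))
    (fun f hf => ⟨((mem_pdiv hP0).1 hf).1, ((mem_pdiv hP0).1 hf).2.1⟩)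
    (fun f => leg f (w f))
    (fun f hf => leg_pm ((mem_pdiv hP0).1 hf).1
      (hw f ((mem_pdiv hP0).1 hf).1 ((mem_pdiv hP0).1 hf).2.1)) A1.natDegree
  have hlegA : ∀ f : F[X], f.Monic → Irreducible f → f ∣ A * B * D * E → leg f (w f * l) = 1 :=
    fun f h1 h2 h3 => leg_w h1 (hw f h1 h2) (hleg f ((mem_pdiv hP0).2 ⟨h1, h2, h3⟩))
  have dvA : A ∣ A * B * D * E := ⟨B * D * E, by ring⟩
  have dvB : B ∣ A * B * D * E := ⟨A * D * E, by ring⟩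
  have dvD : D ∣ A * B * D * E := ⟨A * B * E, by ring⟩
  have dvE : E ∣ A * B * D * E := ⟨A * B * D, by ring⟩
  have hlP : IsCoprime (A * B * D * E) l := by
    rw [isCoprime_comm]
    apply hnd hli
    intro hd
    have := hlegA l hl hli hd
    rw [leg_mul hl, (leg_eq_zero hl).2 (fun h => not_both hli h dvd_rfl dvd_rfl), mul_zero] at this
    omega
  have clA := hlP.of_isCoprime_of_dvd_left dvA
  have clB := hlP.of_isCoprime_of_dvd_left dvB
  have clD := hlP.of_isCoprime_of_dvd_left dvD
  have clE := hlP.of_isCoprime_of_dvd_left dvE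
  have clG := clA.of_isCoprime_of_dvd_left dGA
  have uk : IsUnit (C k) := isUnit_C.2 (isUnit_iff_ne_zero.2 hk0)
  have nkl : (C k * l).natDegree = l.natDegree := natDegree_C_mul hk0
  have lkl : (C k * l).leadingCoeff = k := by
    rw [leadingCoeff_mul, leadingCoeff_C, hl.leadingCoeff, mul_one]
  have nGl : (-(C k) * G * l).natDegree = G.natDegree + l.natDegree := by
    rw [neg_mul, neg_mul, natDegree_neg, mul_assoc, natDegree_C_mul hk0, hG.natDegree_mul hl]
  have lGl : (-(C k) * G * l).leadingCoeff = -k := by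
    rw [neg_mul, neg_mul, leadingCoeff_neg, leadingCoeff_mul, leadingCoeff_mul, leadingCoeff_C,
      hl.leadingCoeff, hG.leadingCoeff, mul_one, mul_one]
  have hA1l : ∀ f : F[X], f.Monic → Irreducible f → f ∣ A1 → leg f (-(B1 * (C k * l))) = 1 := by
    intro f h1 h2 h3
    have := hlegA f h1 h2 ((h3.trans dA1).trans dvA)
    simp only [w, if_pos h3] at this
    rw [← this]; congr 1; ring
  have hB1l : ∀ f : F[X], f.Monic → Irreducible f → f ∣ B1 → leg f (-(A1 * (C k * l))) = 1 := by
    intro f h1 h2 h3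
    have := hlegA f h1 h2 ((h3.trans dB1).trans dvB)
    simp only [w, if_pos h3, if_neg (fun h => not_both h2 cAB h h3)] at this
    rw [← this]; congr 1; ring
  obtain ⟨x, y, z, hxyz, e1⟩ := tern_iso hodd sA1 sB1 uk.squarefree hl hli cAB (cop_C hk0) (cop_C hk0)
    (clA.of_isCoprime_of_dvd_left dA1) (clB.of_isCoprime_of_dvd_left dB1)
    (cop_C hk0).symm hA1l hB1l
    (fun f _ h2 h3 => absurd (isUnit_of_dvd_unit h3 uk) h2.not_isUnit)
    (by
      unfold InfOK
      rw [nkl, lkl]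
      rcases hk with ⟨h1, h2, h3⟩ | ⟨h1, h2, h3⟩
      · right
        refine ⟨by omega, ?_⟩
        have : -(A1.leadingCoeff * k) = A1.leadingCoeff * A1.leadingCoeff := by rw [h3]; ring
        rw [this, chiF_self (leadingCoeff_ne_zero.2 sA1.ne_zero)]
      · left; omega)
  have uk' : IsUnit (-(C k)) := uk.neg
  have assG : -(C k) * G ∣ G := uk'.mul_left_dvd.2 dvd_rfl
  obtain ⟨p, q, r, hpqr, e2⟩ := tern_iso hodd (γ := -(C k) * G) sD sE (sG.squarefree_of_dvd assG) hl hli hED.symm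
    (cDG.of_isCoprime_of_dvd_right assG) (cEG.of_isCoprime_of_dvd_right assG) clD clE
    (clG.of_isCoprime_of_dvd_left assG)
    (by
      intro f h1 h2 h3
      have hT := hlegA f h1 h2 (h3.trans dvD)
      have key : -(E * (-(C k) * G * l)) = E * C k * G * l := by ring
      rw [key]
      by_cases hfA : f ∣ A1
      · have q1 := hAD f h1 h2 (hfA.trans dA1) h3
        have q2 := hA1l f h1 h2 hfA
        have cB : IsCoprime f B1 := hnd h2 fun h => not_both h2 cAB hfA h
        have q3 : leg f (-(B * E) * -(B1 * (C k * l))) = 1 := by rw [leg_mul h1, q1, q2, one_mul]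
        have q4 : -(B * E) * -(B1 * (C k * l)) = (B1 * B1) * (E * C k * G * l) := by rw [eB]; ring
        rw [q4, leg_mul h1, leg_mul h1, leg_mul_self h1 cB, one_mul] at q3
        exact q3
      by_cases hfB : f ∣ B1
      · have q1 := hBD f h1 h2 (hfB.trans dB1) h3
        have q2 := hB1l f h1 h2 hfB
        have cB : IsCoprime f A1 := hnd h2 hfA
        have q3 : leg f (-(A * E) * -(A1 * (C k * l))) = 1 := by rw [leg_mul h1, q1, q2, one_mul]
        have q4 : -(A * E) * -(A1 * (C k * l)) = (A1 * A1) * (E * C k * G * l) := by rw [eA]; ring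
        rw [q4, leg_mul h1, leg_mul h1, leg_mul_self h1 cB, one_mul] at q3
        exact q3
      simp only [w, if_neg hfA, if_neg hfB, if_pos h3] at hT
      exact hT)
    (by
      intro f h1 h2 h3
      have hT := hlegA f h1 h2 (h3.trans dvE)
      simp only [w, if_neg (fun h => not_both h2 cEA1 h3 h), if_neg (fun h => not_both h2 cEB1 h3 h),
        if_neg (fun h => not_both h2 hED h3 h), if_pos h3] at hT
      rw [← hT]; congr 1; ring)
    (by
      intro f h1 h2 h3
      have h4 := h3.trans assG
      exact hAB f h1 h2 (h4.trans dGA) (h4.trans dGB))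
    (by
      unfold InfOK
      rw [nGl, lGl]
      rcases hk with ⟨h1, h2, h3⟩ | ⟨h1, h2, h3⟩
      · left; omega
      · right
        refine ⟨by omega, ?_⟩
        have : -(D.leadingCoeff * -k) = D.leadingCoeff * D.leadingCoeff := by rw [h3]; ring
        rw [this, chiF_self (leadingCoeff_ne_zero.2 sD.ne_zero)])
  by_cases hz : z = 0
  · refine ⟨x, y, 0, 0, ?_, ?_⟩
    · rcases hxyz with h | h | h
      · exact Or.inl h
      · exact Or.inr (Or.inl h)
      · exact absurd hz h
    · rw [hz] at e1
      rw [eA, eB]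
      linear_combination G * e1
  by_cases hr : r = 0
  · refine ⟨0, 0, p, q, ?_, ?_⟩
    · rcases hpqr with h | h | h
      · exact Or.inr (Or.inr (Or.inl h))
      · exact Or.inr (Or.inr (Or.inr h))
      · exact absurd hr h
    · rw [hr] at e2
      linear_combination e2
  refine ⟨r * x, r * y, z * p, z * q, ?_, ?_⟩
  · by_contra hcon
    push Not at hcon
    have hx : x = 0 := (mul_eq_zero.1 hcon.1).resolve_left hr
    have hy : y = 0 := (mul_eq_zero.1 hcon.2.1).resolve_left hr
    rw [hx, hy] at e1
    have : C k * l * z ^ 2 = 0 := by linear_combination e1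
    exact mul_ne_zero (mul_ne_zero uk.ne_zero hl.ne_zero) (pow_ne_zero 2 hz) this
  · rw [eA, eB]
    linear_combination G * r ^ 2 * e1 + z ^ 2 * e2

end

section
open Polynomial
set_option linter.all false
variable {F : Type*} [Field F] [Fintype F]

lemma tri_cube {f x y z c Q : F[X]} (hQ : x * y * z * c = Q) (hx : f ∣ x) (hy : f ∣ y)
    (hz : f ∣ z) : f ^ 3 ∣ Q := by
  rw [← hQ]
  have : f ^ 3 ∣ x * y * z := by
    have e : f ^ 3 = f * f * f := by ring
    rw [e]; exact mul_dvd_mul (mul_dvd_mul hx hy) hz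
  exact this.mul_right c

lemma main_core (hodd : ringChar F ≠ 2) {U V A B D : F[X]}
    (sU : Squarefree U) (sV : Squarefree V)
    (sA : Squarefree A) (sB : Squarefree B) (sD : Squarefree D)
    (hcf : ∀ f : F[X], f.Monic → Irreducible f → ¬ f ^ 3 ∣ U * V * A * B * D)
    (h2 : ∀ x y : F[X], U * x ^ 2 + V * y ^ 2 = 0 → x = 0 ∧ y = 0)
    (h3 : ∀ x y z : F[X], A * x ^ 2 + B * y ^ 2 + D * z ^ 2 = 0 → x = 0 ∧ y = 0 ∧ z = 0)
    (hUV : U.natDegree % 2 = V.natDegree % 2)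
    (hpar : (A.natDegree % 2 = D.natDegree % 2 ∧ A.natDegree % 2 = U.natDegree % 2) ∨
      (A.natDegree % 2 = B.natDegree % 2 ∧ A.natDegree % 2 = D.natDegree % 2)) :
    ∃ (ε : ℕ) (b P : F[X]), ε ≤ 1 ∧ IsCoprime b (U * V * A * B * D) ∧
      (P.Monic ∧ P ∣ U ∧ P ∣ V ∧ ∀ r : F[X], r ∣ U → r ∣ V → r ∣ P) ∧
      ∀ p : F[X], p.Monic → Irreducible p → (U * V * A * B * D) ∣ (p - b) → p.natDegree % 2 = ε →
        (∃ x y z : F[X], z ≠ 0 ∧ U * x ^ 2 + V * y ^ 2 = P * p * z ^ 2) ∧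
        (∃ u v w s : F[X], s ≠ 0 ∧ A * u ^ 2 + B * v ^ 2 + D * w ^ 2 + P * p * s ^ 2 = 0) := by
  classical
  obtain ⟨P, c1, c2, hP, eU, eV, c12, cP1, cP2, hmax⟩ := exists_split sU sV
  have dU1 : c1 ∣ U := ⟨P, by rw [eU, mul_comm]⟩
  have dV1 : c2 ∣ V := ⟨P, by rw [eV, mul_comm]⟩
  have dPU : P ∣ U := ⟨c1, eU⟩
  have dPV : P ∣ V := ⟨c2, eV⟩
  have s1 := sU.squarefree_of_dvd dU1
  have s2 := sV.squarefree_of_dvd dV1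
  have sP := sU.squarefree_of_dvd dPU
  have nU : U.natDegree = P.natDegree + c1.natDegree := by
    rw [eU, natDegree_mul hP.ne_zero s1.ne_zero]
  have nV : V.natDegree = P.natDegree + c2.natDegree := by
    rw [eV, natDegree_mul hP.ne_zero s2.ne_zero]
  set Q := U * V * A * B * D with hQ
  have hQ0 : Q ≠ 0 := mul_ne_zero (mul_ne_zero (mul_ne_zero (mul_ne_zero sU.ne_zero sV.ne_zero)
    sA.ne_zero) sB.ne_zero) sD.ne_zero
  have hnd : ∀ {f x : F[X]}, Irreducible f → ¬ f ∣ x → IsCoprime f x :=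
    fun hi h => hi.coprime_iff_not_dvd.2 h
  have tUVA : ∀ f : F[X], f.Monic → Irreducible f → f ∣ U → f ∣ V → f ∣ A → False :=
    fun f h h' a b c => hcf f h h' (tri_cube (c := B * D) (by rw [hQ]; ring) a b c)
  have tUVB : ∀ f : F[X], f.Monic → Irreducible f → f ∣ U → f ∣ V → f ∣ B → False :=
    fun f h h' a b c => hcf f h h' (tri_cube (c := A * D) (by rw [hQ]; ring) a b c)
  have tUVD : ∀ f : F[X], f.Monic → Irreducible f → f ∣ U → f ∣ V → f ∣ D → False :=
    fun f h h' a b c => hcf f h h' (tri_cube (c := A * B) (by rw [hQ]; ring) a b c)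
  have tUAB : ∀ f : F[X], f.Monic → Irreducible f → f ∣ U → f ∣ A → f ∣ B → False :=
    fun f h h' a b c => hcf f h h' (tri_cube (c := V * D) (by rw [hQ]; ring) a b c)
  have tUAD : ∀ f : F[X], f.Monic → Irreducible f → f ∣ U → f ∣ A → f ∣ D → False :=
    fun f h h' a b c => hcf f h h' (tri_cube (c := V * B) (by rw [hQ]; ring) a b c)
  have tUBD : ∀ f : F[X], f.Monic → Irreducible f → f ∣ U → f ∣ B → f ∣ D → False :=
    fun f h h' a b c => hcf f h h' (tri_cube (c := V * A) (by rw [hQ]; ring) a b c)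
  have tVAB : ∀ f : F[X], f.Monic → Irreducible f → f ∣ V → f ∣ A → f ∣ B → False :=
    fun f h h' a b c => hcf f h h' (tri_cube (c := U * D) (by rw [hQ]; ring) a b c)
  have tVAD : ∀ f : F[X], f.Monic → Irreducible f → f ∣ V → f ∣ A → f ∣ D → False :=
    fun f h h' a b c => hcf f h h' (tri_cube (c := U * B) (by rw [hQ]; ring) a b c)
  have tVBD : ∀ f : F[X], f.Monic → Irreducible f → f ∣ V → f ∣ B → f ∣ D → False :=
    fun f h h' a b c => hcf f h h' (tri_cube (c := U * A) (by rw [hQ]; ring) a b c)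
  have tABD : ∀ f : F[X], f.Monic → Irreducible f → f ∣ A → f ∣ B → f ∣ D → False :=
    fun f h h' a b c => hcf f h h' (tri_cube (c := U * V) (by rw [hQ]; ring) a b c)
  have dU : U ∣ Q := ⟨V * A * B * D, by rw [hQ]; ring⟩
  have dV : V ∣ Q := ⟨U * A * B * D, by rw [hQ]; ring⟩
  have dA : A ∣ Q := ⟨U * V * B * D, by rw [hQ]; ring⟩
  have dB : B ∣ Q := ⟨U * V * A * D, by rw [hQ]; ring⟩
  have dD : D ∣ Q := ⟨U * V * A * B, by rw [hQ]; ring⟩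
  let t : F[X] → F[X] := fun f =>
    if f ∣ c1 then c2 else if f ∣ c2 then c1 else
    if f ∣ A ∧ f ∣ B then -(D * P) else if f ∣ A ∧ f ∣ D then -(B * P) else
    if f ∣ B ∧ f ∣ D then -(A * P) else 1
  have ht : ∀ f : F[X], f.Monic → Irreducible f → IsCoprime f (t f) := by
    intro f hf hi
    simp only [t]
    split_ifs with k1 k2 k3 k4 k5
    · exact hnd hi fun h => not_both hi c12 k1 h
    · exact hnd hi k1
    · exact ((hnd hi fun h => tABD f hf hi k3.1 k3.2 h).mul_right
        (hnd hi fun h => tUAB f hf hi (h.trans dPU) k3.1 k3.2)).neg_right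
    · exact ((hnd hi fun h => tABD f hf hi k4.1 h k4.2).mul_right
        (hnd hi fun h => tUAD f hf hi (h.trans dPU) k4.1 k4.2)).neg_right
    · exact ((hnd hi fun h => tABD f hf hi h k5.1 k5.2).mul_right
        (hnd hi fun h => tUBD f hf hi (h.trans dPU) k5.1 k5.2)).neg_right
    · exact isCoprime_one_right
  obtain ⟨b, hb⟩ := crt (pdiv Q)
    (fun f hf => ⟨((mem_pdiv hQ0).1 hf).1, ((mem_pdiv hQ0).1 hf).2.1⟩) t
  have hbQ : IsCoprime b Q := by
    rw [isCoprime_comm]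
    refine coprime_of_no_prime hQ0 fun f hf hi hd hfb => ?_
    have q1 := hb f ((mem_pdiv hQ0).2 ⟨hf, hi, hd⟩)
    have q2 : f ∣ t f := (dvd_sub_right hfb).1 q1
    exact not_both hi (ht f hf hi) dvd_rfl q2
  refine ⟨c1.natDegree % 2, b, P, by omega, hbQ, ⟨hP, dPU, dPV, hmax⟩, ?_⟩
  intro p hp hpi hpb hpd
  have cpQ : IsCoprime p Q := (coprime_congr hpb).2 hbQ
  have hleg : ∀ f : F[X], f.Monic → Irreducible f → f ∣ Q → leg f p = leg f (t f) := by
    intro f hf hi hd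
    apply leg_congr hf
    have := dvd_add (hd.trans hpb) (hb f ((mem_pdiv hQ0).2 ⟨hf, hi, hd⟩))
    have e : p - t f = p - b + (b - t f) := by ring
    rw [e]; exact this
  have hlegw : ∀ f : F[X], f.Monic → Irreducible f → f ∣ Q → leg f (t f * p) = 1 :=
    fun f hf hi hd => leg_w hf (ht f hf hi) (hleg f hf hi hd)
  have cU := (cpQ.of_isCoprime_of_dvd_right dU).symm
  have cV := (cpQ.of_isCoprime_of_dvd_right dV).symm
  have cA := (cpQ.of_isCoprime_of_dvd_right dA)
  have cB := (cpQ.of_isCoprime_of_dvd_right dB)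
  have cD := (cpQ.of_isCoprime_of_dvd_right dD)
  have cPp := cU.of_isCoprime_of_dvd_left dPU
  have u1 : IsUnit (-1 : F[X]) := isUnit_one.neg
  have cm1 : ∀ x : F[X], IsCoprime x (-1) := fun x => isCoprime_one_right.neg_right
  constructor
  · obtain ⟨x, y, z, hxyz, e⟩ := tern_iso hodd (γ := -1) s1 s2 u1.squarefree hp hpi c12 (cm1 _) (cm1 _)
      (cU.of_isCoprime_of_dvd_left dU1) (cV.of_isCoprime_of_dvd_left dV1) (cm1 _).symm
      (by
        intro f hf hi hd
        have := hlegw f hf hi ((hd.trans dU1).trans dU)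
        simp only [t, if_pos hd] at this
        rw [← this]; congr 1; ring)
      (by
        intro f hf hi hd
        have := hlegw f hf hi ((hd.trans dV1).trans dV)
        simp only [t, if_pos hd, if_neg (fun h => not_both hi c12 h hd)] at this
        rw [← this]; congr 1; ring)
      (fun f _ hi hd => absurd (isUnit_of_dvd_unit hd u1) hi.not_isUnit)
      (by
        left
        rw [neg_one_mul, natDegree_neg]
        omega)
    refine ⟨x, y, z, ?_, ?_⟩
    · rintro rfl
      obtain ⟨rfl, rfl⟩ := h2 x y (by rw [eU, eV]; linear_combination P * e)
      simp at hxyz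
    · rw [eU, eV]; linear_combination P * e
  · have sE : Squarefree (P * p) := squarefree_mul_iff.2 ⟨cPp.isRelPrime, sP, hpi.squarefree⟩
    have nE : (P * p).natDegree = P.natDegree + p.natDegree := hP.natDegree_mul hp
    have cPA : IsCoprime P A := coprime_of_no_prime hP.ne_zero fun f hf hi h h' =>
      tUVA f hf hi (h.trans dPU) (h.trans dPV) h'
    have cPB : IsCoprime P B := coprime_of_no_prime hP.ne_zero fun f hf hi h h' =>
      tUVB f hf hi (h.trans dPU) (h.trans dPV) h'
    have cPD : IsCoprime P D := coprime_of_no_prime hP.ne_zero fun f hf hi h h' =>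
      tUVD f hf hi (h.trans dPU) (h.trans dPV) h'
    obtain ⟨u, v, w, s, hne, e⟩ := quat hodd sA sB sD sE (cPA.mul_left cA) (cPB.mul_left cB)
      (cPD.mul_left cD) tABD
      (by
        intro f hf hi k1 k2
        have := hlegw f hf hi (k1.trans dA)
        simp only [t, if_neg (fun h : f ∣ c1 => tUAB f hf hi (h.trans dU1) k1 k2),
          if_neg (fun h : f ∣ c2 => tVAB f hf hi (h.trans dV1) k1 k2), k1, k2, and_self, if_true] at this
        rw [← this]; congr 1; ring)
      (by
        intro f hf hi k1 k2
        have := hlegw f hf hi (k1.trans dA)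
        simp only [t, if_neg (fun h : f ∣ c1 => tUAD f hf hi (h.trans dU1) k1 k2),
          if_neg (fun h : f ∣ c2 => tVAD f hf hi (h.trans dV1) k1 k2), 
          if_neg (fun h : f ∣ A ∧ f ∣ B => tABD f hf hi h.1 h.2 k2)] at this
        rw [if_pos ⟨k1, k2⟩] at this
        rw [← this]; congr 1; ring)
      (by
        intro f hf hi k1 k2
        have := hlegw f hf hi (k1.trans dB)
        simp only [t, if_neg (fun h : f ∣ c1 => tUBD f hf hi (h.trans dU1) k1 k2),
          if_neg (fun h : f ∣ c2 => tVBD f hf hi (h.trans dV1) k1 k2), 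
          if_neg (fun h : f ∣ A ∧ f ∣ B => tABD f hf hi h.1 h.2 k2),
          if_neg (fun h : f ∣ A ∧ f ∣ D => tABD f hf hi h.1 k1 h.2)] at this
        rw [if_pos ⟨k1, k2⟩] at this
        rw [← this]; congr 1; ring)
      (by rw [nE]; omega)
    refine ⟨u, v, w, s, ?_, e⟩
    rintro rfl
    obtain ⟨rfl, rfl, rfl⟩ := h3 u v w (by linear_combination e)
    simp at hne

lemma parity_perm (g : Fin 5 → Bool) : ∃ σ : Equiv.Perm (Fin 5), g (σ 0) = g (σ 1) ∧
    ((g (σ 2) = g (σ 4) ∧ g (σ 2) = g (σ 0)) ∨ (g (σ 2) = g (σ 3) ∧ g (σ 2) = g (σ 4))) := by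
  have key : ∀ b0 b1 b2 b3 b4 : Bool, ∃ i j : Fin 5, ∃ τ ∈ [Equiv.swap 3 i, Equiv.swap 0 i * Equiv.swap 1 j],
      (fun g : Fin 5 → Bool => g (τ 0) = g (τ 1) ∧
    ((g (τ 2) = g (τ 4) ∧ g (τ 2) = g (τ 0)) ∨ (g (τ 2) = g (τ 3) ∧ g (τ 2) = g (τ 4)))) ![b0, b1, b2, b3, b4] := by
    decide +kernel
  obtain ⟨i, j, τ, -, h⟩ := key (g 0) (g 1) (g 2) (g 3) (g 4)
  have e : ![g 0, g 1, g 2, g 3, g 4] = g := by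
    funext k; fin_cases k <;> rfl
  rw [e] at h
  exact ⟨τ, h⟩

lemma hter_perm {K : Type*} [Field K] {c : Fin 5 → K}
    (hter : ∀ i j k : Fin 5, i < j → j < k → ∀ x y z : K,
      c i * x ^ 2 + c j * y ^ 2 + c k * z ^ 2 = 0 → x = 0 ∧ y = 0 ∧ z = 0)
    {i j k : Fin 5} (hij : i ≠ j) (hik : i ≠ k) (hjk : j ≠ k) (x y z : K)
    (h : c i * x ^ 2 + c j * y ^ 2 + c k * z ^ 2 = 0) : x = 0 ∧ y = 0 ∧ z = 0 := by
  rcases lt_or_gt_of_ne hij with h1 | h1 <;> rcases lt_or_gt_of_ne hik with h2 | h2 <;>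
    rcases lt_or_gt_of_ne hjk with h3 | h3
  · exact hter i j k h1 h3 x y z h
  · have := hter i k j h2 h3 x z y (by linear_combination h); tauto
  · omega
  · have := hter k i j h2 h1 z x y (by linear_combination h); tauto
  · have := hter j i k h1 h2 y x z (by linear_combination h); tauto
  · omega
  · have := hter j k i h3 h2 y z x (by linear_combination h); tauto
  · have := hter k j i h3 h1 z y x (by linear_combination h); tauto

end

/-- splitting a quinary diagonal form with squarefree coefficients,
cubefree determinant and anisotropic ternary subforms: there are a permutation `σ`, a
parity `ε` and a residue class `b` modulo `D = a₁a₂a₃a₄a₅` such that for every monic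
irreducible `a ≡ b (mod D)` of degree `≡ ε (mod 2)`, both
`a_{σ(1)}x² + a_{σ(2)}y² = P·a` and `−a_{σ(3)}u² − a_{σ(4)}v² − a_{σ(5)}w² = P·a` are
solvable over `𝔽_q(t)`, where `P` is the monic gcd of `a_{σ(1)}` and `a_{σ(2)}`. -/
theorem splitting_quinary
    {F : Type*} [Field F] [Fintype F] (hodd : ringChar F ≠ 2)
    (a : Fin 5 → F[X]) (hsf : ∀ m, Squarefree (a m))
    (hcf : ∀ f : F[X], f.Monic → Irreducible f →
      ¬ f ^ 3 ∣ (a 0 * a 1 * a 2 * a 3 * a 4))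
    (hter : ∀ i j k : Fin 5, i < j → j < k → ∀ x y z : RatFunc F,
      algebraMap F[X] (RatFunc F) (a i) * x ^ 2 +
        algebraMap F[X] (RatFunc F) (a j) * y ^ 2 +
        algebraMap F[X] (RatFunc F) (a k) * z ^ 2 = 0 → x = 0 ∧ y = 0 ∧ z = 0) :
    ∃ (σ : Equiv.Perm (Fin 5)) (ε : ℕ) (b P : F[X]),
      ε ≤ 1 ∧
      IsCoprime b (a 0 * a 1 * a 2 * a 3 * a 4) ∧
      IsMonicGcd (a (σ 0)) (a (σ 1)) P ∧
      ∀ p : F[X], p.Monic → Irreducible p →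
        (a 0 * a 1 * a 2 * a 3 * a 4) ∣ (p - b) → p.natDegree % 2 = ε →
        (∃ x y : RatFunc F,
          algebraMap F[X] (RatFunc F) (a (σ 0)) * x ^ 2 +
            algebraMap F[X] (RatFunc F) (a (σ 1)) * y ^ 2 =
          algebraMap F[X] (RatFunc F) (P * p)) ∧
        (∃ u v w : RatFunc F,
          -(algebraMap F[X] (RatFunc F) (a (σ 2)) * u ^ 2) -
            algebraMap F[X] (RatFunc F) (a (σ 3)) * v ^ 2 -
            algebraMap F[X] (RatFunc F) (a (σ 4)) * w ^ 2 =
          algebraMap F[X] (RatFunc F) (P * p)) := by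
  obtain ⟨σ, hσ1, hσ2⟩ := parity_perm (fun i => decide ((a i).natDegree % 2 = 0))
  have hb : ∀ m n : ℕ, decide (m % 2 = 0) = decide (n % 2 = 0) → m % 2 = n % 2 := by
    intro m n h
    have := decide_eq_decide.1 h
    omega
  have hQ : a 0 * a 1 * a 2 * a 3 * a 4 = a (σ 0) * a (σ 1) * a (σ 2) * a (σ 3) * a (σ 4) := by
    have := Equiv.prod_comp σ a
    rw [Fin.prod_univ_five, Fin.prod_univ_five] at this
    exact this.symm
  have hne : ∀ i j : Fin 5, i ≠ j → σ i ≠ σ j := fun i j h h' => h (σ.injective h')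
  have hter' := @hter_perm (RatFunc F) _ (fun i => algebraMap F[X] (RatFunc F) (a i)) hter
  have hinj := IsFractionRing.injective F[X] (RatFunc F)
  have hz : ∀ x : F[X], algebraMap F[X] (RatFunc F) x = 0 → x = 0 := fun x hx =>
    (map_eq_zero_iff _ hinj).1 hx
  obtain ⟨ε, b, P, h1, h2, h3, h4⟩ := main_core hodd (hsf (σ 0)) (hsf (σ 1)) (hsf (σ 2)) (hsf (σ 3))
    (hsf (σ 4)) (by rw [← hQ]; exact hcf)
    (by
      intro x y h
      have e := congrArg (algebraMap F[X] (RatFunc F)) h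
      simp only [map_add, map_mul, map_pow, map_zero] at e
      have := hter' (hne 0 1 (by decide)) (hne 0 2 (by decide)) (hne 1 2 (by decide))
        (algebraMap F[X] (RatFunc F) x) (algebraMap F[X] (RatFunc F) y) 0
        (by linear_combination e)
      exact ⟨hz _ this.1, hz _ this.2.1⟩)
    (by
      intro x y z h
      have e := congrArg (algebraMap F[X] (RatFunc F)) h
      simp only [map_add, map_mul, map_pow, map_zero] at e
      have := hter' (hne 2 3 (by decide)) (hne 2 4 (by decide)) (hne 3 4 (by decide))
        (algebraMap F[X] (RatFunc F) x) (algebraMap F[X] (RatFunc F) y)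
        (algebraMap F[X] (RatFunc F) z) (by linear_combination e)
      exact ⟨hz _ this.1, hz _ this.2.1, hz _ this.2.2⟩)
    (hb _ _ hσ1) (by
      rcases hσ2 with ⟨e1, e2⟩ | ⟨e1, e2⟩
      · exact Or.inl ⟨hb _ _ e1, hb _ _ e2⟩
      · exact Or.inr ⟨hb _ _ e1, hb _ _ e2⟩)
  refine ⟨σ, ε, b, P, h1, by rw [hQ]; exact h2, h3, ?_⟩
  intro p hp hpi hpb hpd
  rw [hQ] at hpb
  obtain ⟨⟨x, y, z, hz0, e⟩, ⟨u, v, w, s, hs0, e'⟩⟩ := h4 p hp hpi hpb hpd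
  have hz1 : algebraMap F[X] (RatFunc F) z ≠ 0 := fun h => hz0 (hz _ h)
  have hs1 : algebraMap F[X] (RatFunc F) s ≠ 0 := fun h => hs0 (hz _ h)
  have e := congrArg (algebraMap F[X] (RatFunc F)) e
  have e' := congrArg (algebraMap F[X] (RatFunc F)) e'
  simp only [map_add, map_mul, map_pow, map_zero] at e e'
  constructor
  · refine ⟨algebraMap F[X] (RatFunc F) x / algebraMap F[X] (RatFunc F) z,
      algebraMap F[X] (RatFunc F) y / algebraMap F[X] (RatFunc F) z, ?_⟩
    rw [map_mul]
    field_simp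
    linear_combination e
  · refine ⟨algebraMap F[X] (RatFunc F) u / algebraMap F[X] (RatFunc F) s,
      algebraMap F[X] (RatFunc F) v / algebraMap F[X] (RatFunc F) s,
      algebraMap F[X] (RatFunc F) w / algebraMap F[X] (RatFunc F) s, ?_⟩
    rw [map_mul]
    field_simp
    linear_combination -e'
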